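/- Let n ≥ 4, let A be the Cartan matrix of type D_n and ι an admissible sequence adapted to A. Then for each k ∈ [1,n−2], the set of elements of the form S_{l_p}⋯S_{l_1} x_{r,k} (p ≥ 0, r, l_1,…,l_p ≥ 1) equals the set of tableaux [j_1,…,j_k]^D_s in Tab_{D,ι} whose first entry satisfies j_1 ≠ ovl(n+1). -/

import Mathlib

noncomputable section

/-- The coordinate linear form `x_k` (as a coefficient vector). -/
def xc (k : ℕ) : ℕ → ℚ := fun l => if l = k then 1 else 0

/-- Cartan matrix of type `A_n`. -/
def cartanA (_n : ℕ) (i j : ℕ) : ℤ :=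
  if i = j then 2 else if i + 1 = j ∨ j + 1 = i then -1 else 0

/-- Cartan matrix of type `B_n`. -/
def cartanB (n : ℕ) (i j : ℕ) : ℤ :=
  if i = j then 2
  else if i = n ∧ j = n - 1 then -2
  else if i + 1 = j ∨ j + 1 = i then -1 else 0

/-- Cartan matrix of type `C_n`. -/
def cartanC (n : ℕ) (i j : ℕ) : ℤ :=
  if i = j then 2
  else if i = n - 1 ∧ j = n then -2
  else if i + 1 = j ∨ j + 1 = i then -1 else 0

/-- Cartan matrix of type `D_n`. -/
def cartanD (n : ℕ) (i j : ℕ) : ℤ :=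
  if i = j then 2
  else if (i = n - 1 ∧ j = n) ∨ (i = n ∧ j = n - 1) then 0
  else if (i + 1 = j ∨ j + 1 = i) ∨ (i = n ∧ j = n - 2) ∨ (i = n - 2 ∧ j = n) then -1
  else 0

/-- `ι` (with positions indexed by `k ≥ 1`) takes values in `{1,…,n}`, has no two equal
consecutive entries, and every index occurs infinitely often. -/
def Admissible (n : ℕ) (ι : ℕ → ℕ) : Prop :=
  (∀ k, 1 ≤ k → 1 ≤ ι k ∧ ι k ≤ n) ∧
  (∀ k, 1 ≤ k → ι k ≠ ι (k + 1)) ∧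
  (∀ i, 1 ≤ i → i ≤ n → ∀ N, ∃ k, N ≤ k ∧ ι k = i)

/-- `k^+`: the next position after `k` carrying the same letter. -/
def kplus (ι : ℕ → ℕ) (k : ℕ) : ℕ := sInf {l | k < l ∧ ι l = ι k}

/-- `k^-`: the previous position (`≥ 1`) carrying the same letter, `0` if none. -/
def kminus (ι : ℕ → ℕ) (k : ℕ) : ℕ := sSup {l | 0 < l ∧ l < k ∧ ι l = ι k}

/-- The linear form `β_k` (with `β_0 = 0`). -/
def beta (A : ℕ → ℕ → ℤ) (ι : ℕ → ℕ) (k : ℕ) : ℕ → ℚ :=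
  if k = 0 then 0
  else xc k + (∑ j ∈ Finset.Ioo k (kplus ι k), (A (ι k) (ι j) : ℚ) • xc j) + xc (kplus ι k)

/-- The piecewise-linear operator `S_k`. -/
def Sop (A : ℕ → ℕ → ℤ) (ι : ℕ → ℕ) (k : ℕ) (φ : ℕ → ℚ) : ℕ → ℚ :=
  if 0 < φ k then φ - φ k • beta A ι k
  else φ - φ k • beta A ι (kminus ι k)

/-- Membership in `Ξ_ι`: forms obtained from some `x_{j_0}` by finitely many operators `S_k`. -/
inductive XiMem (A : ℕ → ℕ → ℤ) (ι : ℕ → ℕ) : (ℕ → ℚ) → Prop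
  | base (k : ℕ) (hk : 1 ≤ k) : XiMem A ι (xc k)
  | step (k : ℕ) (hk : 1 ≤ k) (φ : ℕ → ℚ) (h : XiMem A ι φ) : XiMem A ι (Sop A ι k φ)

/-- The set `Ξ_ι`. -/
def Xi (A : ℕ → ℕ → ℤ) (ι : ℕ → ℕ) : Set (ℕ → ℚ) := { φ | XiMem A ι φ }

/-- Forms obtained from a set `g` of generators by finitely many operators `S_k`. -/
inductive XiMemFrom (A : ℕ → ℕ → ℤ) (ι : ℕ → ℕ) (g : Set (ℕ → ℚ)) : (ℕ → ℚ) → Prop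
  | base (φ : ℕ → ℚ) (h : φ ∈ g) : XiMemFrom A ι g φ
  | step (k : ℕ) (hk : 1 ≤ k) (φ : ℕ → ℚ) (h : XiMemFrom A ι g φ) :
      XiMemFrom A ι g (Sop A ι k φ)

/-- `ι` is adapted to the Cartan matrix `A`: for `i ≠ j` with `a_{i,j} ≠ 0`, consecutive
members of the subsequence of `ι` consisting of the letters `i`, `j` are distinct. -/
def Adapted (n : ℕ) (A : ℕ → ℕ → ℤ) (ι : ℕ → ℕ) : Prop :=
  ∀ i j, 1 ≤ i → i ≤ n → 1 ≤ j → j ≤ n → i ≠ j → A i j ≠ 0 →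
    ∀ k l, 1 ≤ k → k < l → (ι k = i ∨ ι k = j) → (ι l = i ∨ ι l = j) →
      (∀ m, k < m → m < l → ι m ≠ i ∧ ι m ≠ j) → ι k ≠ ι l

/-- Position of the first occurrence of the letter `i` in `ι`. -/
def firstOcc (ι : ℕ → ℕ) (i : ℕ) : ℕ := sInf {k | 1 ≤ k ∧ ι k = i}

/-- `p_{i,j} = 1` iff the first occurrence of `i` precedes the first occurrence of `j`. -/
def pval (ι : ℕ → ℕ) (i j : ℕ) : ℕ := if firstOcc ι i < firstOcc ι j then 1 else 0

/-- The function `P(k)` for types A, B, C (and `P(k) = 0` for `k > n`, `k ≤ 1`). -/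
def PABC (ι : ℕ → ℕ) (n k : ℕ) : ℕ :=
  if k ≤ n then ∑ t ∈ Finset.Icc 2 k, pval ι t (t - 1) else 0

/-- The function `P(k)` for type D. -/
def PD (ι : ℕ → ℕ) (n k : ℕ) : ℕ :=
  if k = n then (∑ t ∈ Finset.Icc 2 (n - 2), pval ι t (t - 1)) + pval ι n (n - 2)
  else if k ≤ n then ∑ t ∈ Finset.Icc 2 k, pval ι t (t - 1) else 0

/-- `occPos ι j s`: the position of the `s`-th occurrence of the letter `j` in `ι`
(`0` for `s = 0`). -/
def occPos (ι : ℕ → ℕ) (j : ℕ) : ℕ → ℕ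
  | 0 => 0
  | s + 1 => sInf {k | occPos ι j s < k ∧ ι k = j}

/-- The double-indexed coordinate form `x_{s,j}`, with the conventions
`x_{s,0} = x_{s,n+1} = 0` and `x_{s,j} = 0` for `s ≤ 0`. -/
def xsj (ι : ℕ → ℕ) (n : ℕ) (s : ℤ) (j : ℕ) : ℕ → ℚ :=
  if 1 ≤ s ∧ 1 ≤ j ∧ j ≤ n then xc (occPos ι j s.toNat) else 0

/-- The double-indexed form `β_{s,j}`. -/
def betasj (A : ℕ → ℕ → ℤ) (ι : ℕ → ℕ) (s : ℤ) (j : ℕ) : ℕ → ℚ :=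
  beta A ι (occPos ι j s.toNat)

/-- The double-indexed operator `S_{m,j}`. -/
def Ssj (A : ℕ → ℕ → ℤ) (ι : ℕ → ℕ) (m j : ℕ) (φ : ℕ → ℚ) : ℕ → ℚ :=
  Sop A ι (occPos ι j m) φ

/- Entries of the ordered sets `J_X` are encoded as natural numbers:
an unbarred entry `j ∈ {1,…,n}` is encoded as `j`, a barred entry `j̄` is
encoded as `2n+1-j` (so that `n̄ = n+1, …, 1̄ = 2n` and the total order of
`J_B = J_C` is the numerical order), and the extra symbol `ovl(n+1)` of
types C and D is encoded as `0`. -/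

/-- The box of type A. -/
def boxA (ι : ℕ → ℕ) (n : ℕ) (s : ℤ) (j : ℕ) : ℕ → ℚ :=
  xsj ι n (s + (PABC ι n j : ℤ)) j - xsj ι n (s + (PABC ι n (j - 1) : ℤ) + 1) (j - 1)

/-- The box of type B. -/
def boxB (ι : ℕ → ℕ) (n : ℕ) (s : ℤ) (e : ℕ) : ℕ → ℚ :=
  if e ≤ n then
    xsj ι n (s + (PABC ι n e : ℤ)) e - xsj ι n (s + (PABC ι n (e - 1) : ℤ) + 1) (e - 1)
  else
    xsj ι n (s + (PABC ι n (2 * n - e) : ℤ) + (n : ℤ) - ((2 * n + 1 - e : ℕ) : ℤ) + 1)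
        (2 * n - e)
      - xsj ι n (s + (PABC ι n (2 * n + 1 - e) : ℤ) + (n : ℤ) - ((2 * n + 1 - e : ℕ) : ℤ) + 1)
          (2 * n + 1 - e)

/-- The box of type C (`ovl(n+1)` encoded as `0`). -/
def boxC (ι : ℕ → ℕ) (n : ℕ) (s : ℤ) (e : ℕ) : ℕ → ℚ :=
  if e = 0 then xsj ι n (s + (PABC ι n n : ℤ)) n
  else if e < n then
    xsj ι n (s + (PABC ι n e : ℤ)) e - xsj ι n (s + (PABC ι n (e - 1) : ℤ) + 1) (e - 1)
  else if e = n then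
    (2 : ℚ) • xsj ι n (s + (PABC ι n n : ℤ)) n
      - xsj ι n (s + (PABC ι n (n - 1) : ℤ) + 1) (n - 1)
  else if e = n + 1 then
    xsj ι n (s + (PABC ι n (n - 1) : ℤ) + 1) (n - 1)
      - (2 : ℚ) • xsj ι n (s + (PABC ι n n : ℤ) + 1) n
  else
    xsj ι n (s + (PABC ι n (2 * n - e) : ℤ) + (n : ℤ) - ((2 * n + 1 - e : ℕ) : ℤ) + 1)
        (2 * n - e)
      - xsj ι n (s + (PABC ι n (2 * n + 1 - e) : ℤ) + (n : ℤ) - ((2 * n + 1 - e : ℕ) : ℤ) + 1)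
          (2 * n + 1 - e)

/-- The box of type D (`ovl(n+1)` encoded as `0`, `n̄` as `n+1`, `ovl(n-1)` as `n+2`). -/
def boxD (ι : ℕ → ℕ) (n : ℕ) (s : ℤ) (e : ℕ) : ℕ → ℚ :=
  if e = 0 then xsj ι n (s + (PD ι n n : ℤ)) n
  else if e ≤ n - 2 then
    xsj ι n (s + (PD ι n e : ℤ)) e - xsj ι n (s + (PD ι n (e - 1) : ℤ) + 1) (e - 1)
  else if e = n - 1 then
    xsj ι n (s + (PD ι n (n - 1) : ℤ)) (n - 1) + xsj ι n (s + (PD ι n n : ℤ)) n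
      - xsj ι n (s + (PD ι n (n - 2) : ℤ) + 1) (n - 2)
  else if e = n then
    xsj ι n (s + (PD ι n n : ℤ)) n - xsj ι n (s + (PD ι n (n - 1) : ℤ) + 1) (n - 1)
  else if e = n + 1 then
    xsj ι n (s + (PD ι n (n - 1) : ℤ)) (n - 1) - xsj ι n (s + (PD ι n n : ℤ) + 1) n
  else if e = n + 2 then
    xsj ι n (s + (PD ι n (n - 2) : ℤ) + 1) (n - 2)
      - xsj ι n (s + (PD ι n (n - 1) : ℤ) + 1) (n - 1)
      - xsj ι n (s + (PD ι n n : ℤ) + 1) n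
  else
    xsj ι n (s + (PD ι n (2 * n - e) : ℤ) + (n : ℤ) - ((2 * n + 1 - e : ℕ) : ℤ)) (2 * n - e)
      - xsj ι n (s + (PD ι n (2 * n + 1 - e) : ℤ) + (n : ℤ) - ((2 * n + 1 - e : ℕ) : ℤ))
          (2 * n + 1 - e)

/-- The column tableau `[j_1,…,j_k]_s = Σ_{i=1}^k box_{s+k-i}(j_i)`. -/
def tab (box : ℤ → ℕ → ℕ → ℚ) (s : ℤ) (k : ℕ) (j : ℕ → ℕ) : ℕ → ℚ :=
  ∑ i ∈ Finset.Icc 1 k, box (s + (k : ℤ) - (i : ℤ)) (j i)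

/-- The set `Tab_{A,ι}`. -/
def TabA (ι : ℕ → ℕ) (n : ℕ) : Set (ℕ → ℚ) :=
  { T | ∃ (k : ℕ) (s : ℤ) (j : ℕ → ℕ),
      1 ≤ k ∧ k ≤ n ∧
      (∀ i, 1 ≤ i → i ≤ k → 1 ≤ j i ∧ j i ≤ n + 1) ∧
      (∀ i, 1 ≤ i → i < k → j i < j (i + 1)) ∧
      1 - (PABC ι n k : ℤ) ≤ s ∧
      T = tab (boxA ι n) s k j }

/-- `|·|` on encoded entries of `J_B = J_C`. -/
def absJ (n e : ℕ) : ℕ := if e ≤ n then e else 2 * n + 1 - e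

/-- The set `Tab_{B,ι}`. -/
def TabB (ι : ℕ → ℕ) (n : ℕ) : Set (ℕ → ℚ) :=
  { T | ∃ (k : ℕ) (s : ℤ) (j : ℕ → ℕ),
      1 ≤ k ∧ k ≤ n ∧
      (∀ i, 1 ≤ i → i ≤ k → 1 ≤ j i ∧ j i ≤ 2 * n) ∧
      (∀ i, 1 ≤ i → i < k → j i < j (i + 1)) ∧
      (k = n → ∀ l m, 1 ≤ l → l < m → m ≤ k → absJ n (j l) ≠ absJ n (j m)) ∧
      1 - (PABC ι n k : ℤ) ≤ s ∧
      T = tab (boxB ι n) s k j }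

/-- Defining conditions of `Tab_{C,ι}` on the data `(k,s,j)`. -/
def TabCcond (ι : ℕ → ℕ) (n : ℕ) (k : ℕ) (s : ℤ) (j : ℕ → ℕ) : Prop :=
  (1 ≤ k ∧ k ≤ n - 1 ∧
    (∀ i, 1 ≤ i → i ≤ k → 1 ≤ j i ∧ j i ≤ 2 * n) ∧
    (∀ i, 1 ≤ i → i < k → j i < j (i + 1)) ∧
    1 - (PABC ι n k : ℤ) ≤ s)
  ∨
  (j 1 = 0 ∧ 1 ≤ k ∧ k ≤ n + 1 ∧
    (∀ i, 2 ≤ i → i ≤ k → n + 1 ≤ j i ∧ j i ≤ 2 * n) ∧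
    (∀ i, 2 ≤ i → i < k → j i < j (i + 1)) ∧
    1 - (PABC ι n n : ℤ) ≤ s)

/-- The set `Tab_{C,ι}`. -/
def TabC (ι : ℕ → ℕ) (n : ℕ) : Set (ℕ → ℚ) :=
  { T | ∃ k s j, TabCcond ι n k s j ∧ T = tab (boxC ι n) s k j }

/-- The partial order on (encoded) `J_D`: `a ≤ b` iff `a = b`, or `a < b` numerically and
`(a,b)` is not the incomparable pair `(n, n̄)`. -/
def leD (n a b : ℕ) : Prop := a = b ∨ (a < b ∧ ¬(a = n ∧ b = n + 1))

/-- Defining conditions of `Tab_{D,ι}` on the data `(k,s,j)`. -/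
def TabDcond (ι : ℕ → ℕ) (n : ℕ) (k : ℕ) (s : ℤ) (j : ℕ → ℕ) : Prop :=
  (1 ≤ k ∧ k ≤ n - 2 ∧
    (∀ i, 1 ≤ i → i ≤ k → 1 ≤ j i ∧ j i ≤ 2 * n) ∧
    (∀ i, 1 ≤ i → i < k → ¬ leD n (j (i + 1)) (j i)) ∧
    1 - (PD ι n k : ℤ) ≤ s)
  ∨
  (j 1 = 0 ∧ 1 ≤ k ∧ k ≤ n + 1 ∧
    (∀ i, 2 ≤ i → i ≤ k → n + 1 ≤ j i ∧ j i ≤ 2 * n) ∧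
    (∀ i, 2 ≤ i → i < k → j i < j (i + 1)) ∧
    (k % 2 = 0 → 1 - (PD ι n (n - 1) : ℤ) ≤ s) ∧
    (k % 2 = 1 → 1 - (PD ι n n : ℤ) ≤ s))

/-- The set `Tab_{D,ι}`. -/
def TabD (ι : ℕ → ℕ) (n : ℕ) : Set (ℕ → ℚ) :=
  { T | ∃ k s j, TabDcond ι n k s j ∧ T = tab (boxD ι n) s k j }

end


section Occ

variable {n : ℕ} {ι : ℕ → ℕ}

theorem occ_spec (hadm : Admissible n ι) {i : ℕ} (h1 : 1 ≤ i) (h2 : i ≤ n) (m : ℕ) :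
    occPos ι i m < occPos ι i (m + 1) ∧ ι (occPos ι i (m + 1)) = i := by
  have hne : {k | occPos ι i m < k ∧ ι k = i}.Nonempty := by
    obtain ⟨k, hk, hk'⟩ := hadm.2.2 i h1 h2 (occPos ι i m + 1)
    exact ⟨k, hk, hk'⟩
  exact Nat.sInf_mem hne

theorem occ_least {i m l : ℕ} (h : occPos ι i m < l) (hl : ι l = i) :
    occPos ι i (m + 1) ≤ l := Nat.sInf_le ⟨h, hl⟩

theorem occ_mono (hadm : Admissible n ι) {i : ℕ} (h1 : 1 ≤ i) (h2 : i ≤ n) :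
    StrictMono (occPos ι i) :=
  strictMono_nat_of_lt_succ fun m => (occ_spec hadm h1 h2 m).1

theorem occ_val (hadm : Admissible n ι) {i : ℕ} (h1 : 1 ≤ i) (h2 : i ≤ n) {m : ℕ} (hm : 1 ≤ m) :
    ι (occPos ι i m) = i := by
  obtain ⟨m, rfl⟩ := Nat.exists_eq_add_of_le' hm
  exact (occ_spec hadm h1 h2 m).2

theorem occ_pos (hadm : Admissible n ι) {i : ℕ} (h1 : 1 ≤ i) (h2 : i ≤ n) {m : ℕ} (hm : 1 ≤ m) :
    0 < occPos ι i m := by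
  have := occ_mono hadm h1 h2 (show 0 < m from hm)
  exact lt_of_le_of_lt (Nat.zero_le _) this

theorem occ_surj (hadm : Admissible n ι) {i : ℕ} (h1 : 1 ≤ i) (h2 : i ≤ n) {l : ℕ} (hl : 1 ≤ l)
    (hi : ι l = i) : ∃ m, 1 ≤ m ∧ occPos ι i m = l := by
  classical
  have hex : ∃ m, l < occPos ι i m :=
    ⟨l + 1, lt_of_lt_of_le (Nat.lt_succ_self l) ((occ_mono hadm h1 h2).le_apply)⟩
  have hf := Nat.find_spec hex
  have hmin := fun m (h : m < Nat.find hex) => Nat.find_min hex h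
  generalize Nat.find hex = m at hf hmin
  rcases m with _ | m
  · simp [occPos] at hf
  · have h3 := hmin m (Nat.lt_succ_self m)
    have h4 : occPos ι i m = l := by
      by_contra hne
      have := occ_least (ι := ι) (i := i) (m := m) (l := l) (by omega) hi
      omega
    refine ⟨m, ?_, h4⟩
    rcases m with _ | m
    · simp [occPos] at h4; omega
    · omega

theorem occ_inj (hadm : Admissible n ι) {i i' m m' : ℕ} (h1 : 1 ≤ i) (h2 : i ≤ n)
    (h1' : 1 ≤ i') (h2' : i' ≤ n) (hm : 1 ≤ m) (hm' : 1 ≤ m') :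
    occPos ι i m = occPos ι i' m' ↔ i = i' ∧ m = m' := by
  constructor
  · intro h
    have hi : i = i' := by
      rw [← occ_val hadm h1 h2 hm, h, occ_val hadm h1' h2' hm']
    subst hi
    exact ⟨rfl, (occ_mono hadm h1 h2).injective h⟩
  · rintro ⟨rfl, rfl⟩; rfl

theorem kplus_occ (hadm : Admissible n ι) {i : ℕ} (h1 : 1 ≤ i) (h2 : i ≤ n) {m : ℕ} (hm : 1 ≤ m) :
    kplus ι (occPos ι i m) = occPos ι i (m + 1) := by
  unfold kplus
  rw [occ_val hadm h1 h2 hm]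
  rfl

theorem kminus_occ (hadm : Admissible n ι) {i : ℕ} (h1 : 1 ≤ i) (h2 : i ≤ n) (m : ℕ) :
    kminus ι (occPos ι i (m + 1)) = occPos ι i m := by
  unfold kminus
  rw [occ_val hadm h1 h2 (show 1 ≤ m + 1 by omega)]
  rcases m with _ | m
  · have : {l | 0 < l ∧ l < occPos ι i (0 + 1) ∧ ι l = i} = ∅ := by
      ext l
      simp only [Set.mem_ofPred_eq, Set.mem_empty_iff_false, iff_false]
      rintro ⟨a, b, c⟩
      have := occ_least (ι := ι) (i := i) (m := 0) (l := l) (by simpa [occPos] using a) c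
      omega
    rw [this]
    simp [occPos]
  · apply IsGreatest.csSup_eq
    constructor
    · exact ⟨occ_pos hadm h1 h2 (by omega), occ_mono hadm h1 h2 (by omega),
        occ_val hadm h1 h2 (by omega)⟩
    · rintro l ⟨a, b, c⟩
      by_contra hlt
      have := occ_least (ι := ι) (i := i) (m := m + 1) (l := l) (by omega) c
      omega

theorem between_occ (hadm : Admissible n ι) (hadap : Adapted n (cartanD n) ι) {i j : ℕ}
    (h1 : 1 ≤ i) (h2 : i ≤ n) (h1' : 1 ≤ j) (h2' : j ≤ n) (hij : i ≠ j)
    (hA : cartanD n i j ≠ 0) {m : ℕ} (hm : 1 ≤ m) :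
    ∃ r, 1 ≤ r ∧ occPos ι i m < occPos ι j r ∧ occPos ι j r < occPos ι i (m + 1) := by
  by_contra hcon
  push Not at hcon
  have hpos := occ_pos hadm h1 h2 hm
  have hv := occ_val hadm h1 h2 hm
  have hv' := occ_val hadm h1 h2 (show 1 ≤ m + 1 by omega)
  refine hadap i j h1 h2 h1' h2' hij hA (occPos ι i m) (occPos ι i (m + 1)) hpos
    (occ_mono hadm h1 h2 (by omega)) (Or.inl hv) (Or.inl hv') ?_ (hv.trans hv'.symm)
  intro l hl hl'
  constructor
  · intro hli
    have := occ_least hl hli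
    omega
  · intro hlj
    obtain ⟨r, hr, rfl⟩ := occ_surj hadm h1' h2' (show 1 ≤ l by omega) hlj
    have := hcon r hr hl
    omega

theorem interleave (hadm : Admissible n ι) (hadap : Adapted n (cartanD n) ι) {i j : ℕ}
    (h1 : 1 ≤ i) (h2 : i ≤ n) (h1' : 1 ≤ j) (h2' : j ≤ n) (hij : i ≠ j)
    (hA : cartanD n i j ≠ 0) (hA' : cartanD n j i ≠ 0) (hlt : occPos ι i 1 < occPos ι j 1) :
    ∀ m, occPos ι i (m + 1) < occPos ι j (m + 1) ∧ occPos ι j (m + 1) < occPos ι i (m + 2) := by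
  have mi := occ_mono hadm h1 h2
  have mj := occ_mono hadm h1' h2'
  have step2 : ∀ m, occPos ι i (m + 1) < occPos ι j (m + 1) → (∀ r, 1 ≤ r → r ≤ m →
      occPos ι j r < occPos ι i (m + 1)) → occPos ι j (m + 1) < occPos ι i (m + 2) := by
    intro m _ hr
    obtain ⟨r, hr1, ha, hb⟩ := between_occ hadm hadap h1 h2 h1' h2' hij hA
      (show 1 ≤ m + 1 by omega)
    have : m + 1 ≤ r := by
      by_contra hc
      have := hr r hr1 (by omega)
      omega
    exact lt_of_le_of_lt (mj.monotone this) hb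
  intro m
  induction m with
  | zero => exact ⟨hlt, step2 0 hlt (by omega)⟩
  | succ m ih =>
    have hx : occPos ι i (m + 1 + 1) < occPos ι j (m + 1 + 1) := by
      obtain ⟨r, hr1, ha, hb⟩ := between_occ hadm hadap h1' h2' h1 h2 hij.symm hA'
        (show 1 ≤ m + 1 by omega)
      have : m + 1 < r := mi.lt_iff_lt.1 (ih.1.trans ha)
      exact lt_of_le_of_lt (mi.monotone this) hb
    refine ⟨hx, step2 (m + 1) hx ?_⟩
    intro r _ hr
    exact lt_of_le_of_lt (mj.monotone hr) ih.2

theorem firstOcc_eq (i : ℕ) : firstOcc ι i = occPos ι i 1 := rfl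

theorem pval_add (hadm : Admissible n ι) {i j : ℕ} (h1 : 1 ≤ i) (h2 : i ≤ n)
    (h1' : 1 ≤ j) (h2' : j ≤ n) (hij : i ≠ j) : pval ι i j + pval ι j i = 1 := by
  unfold pval
  rw [firstOcc_eq, firstOcc_eq]
  have : occPos ι i 1 ≠ occPos ι j 1 := by
    rw [Ne, occ_inj hadm h1 h2 h1' h2' le_rfl le_rfl]; tauto
  split_ifs <;> omega

theorem pval_le (i j : ℕ) : pval ι i j ≤ 1 := by
  unfold pval; split_ifs <;> omega

theorem cartanD_symm (n i j : ℕ) : cartanD n i j = cartanD n j i := by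
  unfold cartanD; split_ifs <;> omega

theorem between_iff (hadm : Admissible n ι) (hadap : Adapted n (cartanD n) ι) {i j : ℕ}
    (h1 : 1 ≤ i) (h2 : i ≤ n) (h1' : 1 ≤ j) (h2' : j ≤ n) (hij : i ≠ j)
    (hA : cartanD n j i ≠ 0) {m r : ℕ} (hm : 1 ≤ m) (hr : 1 ≤ r) :
    (occPos ι j m < occPos ι i r ∧ occPos ι i r < occPos ι j (m + 1)) ↔ r = m + pval ι i j := by
  have hA' := cartanD_symm n j i ▸ hA
  have mi := occ_mono hadm h1 h2
  have mj := occ_mono hadm h1' h2'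
  obtain ⟨m, rfl⟩ := Nat.exists_eq_add_of_le' hm
  obtain ⟨r, rfl⟩ := Nat.exists_eq_add_of_le' hr
  have hne : occPos ι i 1 ≠ occPos ι j 1 := by
    rw [Ne, occ_inj hadm h1 h2 h1' h2' le_rfl le_rfl]; tauto
  unfold pval
  rw [firstOcc_eq, firstOcc_eq]
  split_ifs with hlt
  · have H := interleave hadm hadap h1 h2 h1' h2' hij hA' hA hlt
    constructor
    · rintro ⟨a, b⟩
      have a' := mi.lt_iff_lt.1 ((H m).1.trans a)
      have b' := mi.lt_iff_lt.1 (b.trans (H (m + 1)).2)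
      omega
    · intro e
      have : r + 1 = m + 2 := by omega
      rw [this]
      exact ⟨(H m).2, (H (m + 1)).1⟩
  · have H := interleave hadm hadap h1' h2' h1 h2 hij.symm hA hA' (by omega)
    constructor
    · rintro ⟨a, b⟩
      have b' := mi.lt_iff_lt.1 (b.trans (H (m + 1)).1)
      have a' : m < r + 1 := by
        rcases m with _ | m
        · omega
        · exact mi.lt_iff_lt.1 ((H m).2.trans a)
      omega
    · intro e
      have : r + 1 = m + 1 := by omega
      rw [this]
      exact H m

theorem xsj_eval (hadm : Admissible n ι) {v m : ℕ} (h1 : 1 ≤ v) (h2 : v ≤ n) (hm : 1 ≤ m)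
    (z : ℤ) (u : ℕ) :
    xsj ι n z u (occPos ι v m) = if u = v ∧ z = m then 1 else 0 := by
  unfold xsj
  split_ifs with ha hb hb
  · obtain ⟨rfl, rfl⟩ := hb
    simp [xc]
  · unfold xc
    rw [if_neg]
    rw [occ_inj hadm h1 h2 ha.2.1 ha.2.2 hm (by omega)]
    omega
  · omega
  · rfl

theorem xsj_zero (hadm : Admissible n ι) (z : ℤ) (u : ℕ) : xsj ι n z u 0 = 0 := by
  unfold xsj
  split_ifs with ha
  · have := occ_pos hadm ha.2.1 ha.2.2 (show 1 ≤ z.toNat by omega)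
    unfold xc
    rw [if_neg (by omega)]
  · rfl

theorem form_ext (hadm : Admissible n ι) {φ ψ : ℕ → ℚ} (h0 : φ 0 = ψ 0)
    (h : ∀ w r, 1 ≤ w → w ≤ n → 1 ≤ r → φ (occPos ι w r) = ψ (occPos ι w r)) : φ = ψ := by
  ext l
  rcases Nat.eq_zero_or_pos l with rfl | hl
  · exact h0
  · obtain ⟨ha, hb⟩ := hadm.1 l hl
    obtain ⟨m, hm, hml⟩ := occ_surj hadm ha hb hl rfl
    rw [← hml]
    exact h _ _ ha hb hm

theorem beta_apply {A : ℕ → ℕ → ℤ} {k : ℕ} (hk : k ≠ 0) (l : ℕ) :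
    beta A ι k l = (if l = k then 1 else 0) +
      (if k < l ∧ l < kplus ι k then (A (ι k) (ι l) : ℚ) else 0) +
      (if l = kplus ι k then 1 else 0) := by
  unfold beta
  rw [if_neg hk]
  simp only [Pi.add_apply, Finset.sum_apply, Pi.smul_apply, smul_eq_mul, xc, mul_ite, mul_one,
    mul_zero, Finset.sum_ite_eq, Finset.mem_Ioo]

theorem beta_zero' (hadm : Admissible n ι) {A : ℕ → ℕ → ℤ} {v m : ℕ} (h1 : 1 ≤ v) (h2 : v ≤ n)
    (hm : 1 ≤ m) : beta A ι (occPos ι v m) 0 = 0 := by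
  have hp := occ_pos hadm h1 h2 hm
  have hp' := occ_pos hadm h1 h2 (show 1 ≤ m + 1 by omega)
  rw [beta_apply hp.ne', kplus_occ hadm h1 h2 hm, if_neg (by omega), if_neg (by omega),
    if_neg (by omega)]
  simp

theorem beta_eval (hadm : Admissible n ι) (hadap : Adapted n (cartanD n) ι) {v m w r : ℕ}
    (h1 : 1 ≤ v) (h2 : v ≤ n) (hm : 1 ≤ m) (h1' : 1 ≤ w) (h2' : w ≤ n) (hr : 1 ≤ r) :
    beta (cartanD n) ι (occPos ι v m) (occPos ι w r) =
      if w = v then (if r = m ∨ r = m + 1 then 1 else 0)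
      else (if r = m + pval ι w v then (cartanD n v w : ℚ) else 0) := by
  have hp := occ_pos hadm h1 h2 hm
  rw [beta_apply hp.ne', kplus_occ hadm h1 h2 hm, occ_val hadm h1 h2 hm, occ_val hadm h1' h2' hr]
  simp only [occ_inj hadm h1' h2' h1 h2 hr hm,
    occ_inj hadm h1' h2' h1 h2 hr (show 1 ≤ m + 1 by omega)]
  by_cases hwv : w = v
  · subst hwv
    have mi := occ_mono hadm h1 h2
    have hb : ¬ (occPos ι w m < occPos ι w r ∧ occPos ι w r < occPos ι w (m + 1)) := by
      rw [mi.lt_iff_lt, mi.lt_iff_lt]; omega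
    rw [if_neg hb]
    by_cases e1 : r = m
    · simp [e1]
    · by_cases e2 : r = m + 1 <;> simp [e1, e2]
  · by_cases hA : cartanD n v w = 0
    · simp [hwv, hA]
    · simp only [between_iff hadm hadap h1' h2' h1 h2 hwv hA hm hr]
      simp [hwv]

end Occ

section Boxes

variable {n : ℕ} {ι : ℕ → ℕ}

theorem PD_zero (hn : 4 ≤ n) : PD ι n 0 = 0 := by
  unfold PD; rw [if_neg (by omega), if_pos (by omega)]; simp

theorem PD_one (hn : 4 ≤ n) : PD ι n 1 = 0 := by
  unfold PD; rw [if_neg (by omega), if_pos (by omega)]; simp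

theorem PD_succ (hn : 4 ≤ n) {v : ℕ} (h1 : 1 ≤ v) (h2 : v ≤ n - 2) :
    PD ι n (v + 1) = PD ι n v + pval ι (v + 1) v := by
  unfold PD
  rw [if_neg (by omega), if_pos (by omega), if_neg (by omega), if_pos (by omega),
    Finset.sum_Icc_succ_top (by omega)]
  simp

theorem PD_last (hn : 4 ≤ n) : PD ι n n = PD ι n (n - 2) + pval ι n (n - 2) := by
  unfold PD
  rw [if_pos rfl, if_neg (by omega), if_pos (by omega)]

theorem PD_mono_aux (hn : 4 ≤ n) {v : ℕ} (h1 : 1 ≤ v) (d : ℕ) (h2 : v + d ≤ n - 1) :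
    PD ι n v ≤ PD ι n (v + d) ∧ PD ι n (v + d) ≤ PD ι n v + d := by
  induction d with
  | zero => simp
  | succ d ih =>
    have := ih (by omega)
    have h := PD_succ (ι := ι) hn (v := v + d) (by omega) (by omega)
    have h' := pval_le (ι := ι) (v + d + 1) (v + d)
    rw [← add_assoc]
    omega

theorem PD_bound (hn : 4 ≤ n) {k v : ℕ} (hk : 1 ≤ k) (hk2 : k ≤ n - 2) (h1 : 1 ≤ v) (h2 : v ≤ n) :
    PD ι n k ≤ PD ι n v ∨ (v ≤ k ∧ PD ι n k + v ≤ PD ι n v + k) := by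
  rcases Nat.lt_or_ge k v with h | h
  · left
    by_cases hv : v = n
    · have h3 := (PD_mono_aux (ι := ι) hn hk (n - 2 - k) (by omega)).1
      have h4 := PD_last (ι := ι) hn
      rw [show k + (n - 2 - k) = n - 2 by omega] at h3
      subst hv; omega
    · have h3 := (PD_mono_aux (ι := ι) hn hk (v - k) (by omega)).1
      rwa [show k + (v - k) = v by omega] at h3
  · right
    have h3 := (PD_mono_aux (ι := ι) hn h1 (k - v) (by omega)).2
    rw [show v + (k - v) = k by omega] at h3
    omega

theorem beta_low (hn : 4 ≤ n) (hadm : Admissible n ι) (hadap : Adapted n (cartanD n) ι) {v m : ℕ}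
    (h1 : 1 ≤ v) (h2 : v ≤ n - 3) (hm : 1 ≤ m) :
    beta (cartanD n) ι (occPos ι v m) = xsj ι n m v + xsj ι n (m + 1) v
      - xsj ι n ((m : ℤ) + pval ι (v - 1) v) (v - 1) - xsj ι n ((m : ℤ) + pval ι (v + 1) v) (v + 1)
      := by
  refine form_ext hadm ?_ ?_
  · simp [beta_zero' hadm h1 (by omega) hm, xsj_zero hadm]
  · intro w r a b c
    simp only [Pi.add_apply, Pi.sub_apply, xsj_eval hadm a b c,
      beta_eval hadm hadap h1 (show v ≤ n by omega) hm a b c]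
    unfold cartanD
    push_cast
    grind (splits := 25)

theorem beta_fork (hn : 4 ≤ n) (hadm : Admissible n ι) (hadap : Adapted n (cartanD n) ι) {m : ℕ}
    (hm : 1 ≤ m) :
    beta (cartanD n) ι (occPos ι (n - 2) m) = xsj ι n m (n - 2) + xsj ι n (m + 1) (n - 2)
      - xsj ι n ((m : ℤ) + pval ι (n - 3) (n - 2)) (n - 3)
      - xsj ι n ((m : ℤ) + pval ι (n - 1) (n - 2)) (n - 1)
      - xsj ι n ((m : ℤ) + pval ι n (n - 2)) n
      := by
  refine form_ext hadm ?_ ?_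
  · simp [beta_zero' hadm (show 1 ≤ n - 2 by omega) (by omega) hm, xsj_zero hadm]
  · intro w r a b c
    simp only [Pi.add_apply, Pi.sub_apply, xsj_eval hadm a b c,
      beta_eval hadm hadap (show 1 ≤ n - 2 by omega) (show n - 2 ≤ n by omega) hm a b c]
    unfold cartanD
    push_cast
    grind (splits := 25)

theorem beta_leg (hn : 4 ≤ n) (hadm : Admissible n ι) (hadap : Adapted n (cartanD n) ι) {v m : ℕ}
    (h1 : v = n - 1 ∨ v = n) (hm : 1 ≤ m) :
    beta (cartanD n) ι (occPos ι v m) = xsj ι n m v + xsj ι n (m + 1) v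
      - xsj ι n ((m : ℤ) + pval ι (n - 2) v) (n - 2)
      := by
  refine form_ext hadm ?_ ?_
  · simp [beta_zero' hadm (show 1 ≤ v by omega) (by omega) hm, xsj_zero hadm]
  · intro w r a b c
    simp only [Pi.add_apply, Pi.sub_apply, xsj_eval hadm a b c,
      beta_eval hadm hadap (show 1 ≤ v by omega) (show v ≤ n by omega) hm a b c]
    unfold cartanD
    push_cast
    grind (splits := 25)

/-- The two edges `ea1 → eb1`, `ea2 → eb2` of the vector crystal with colour `v`. -/
def ea1 (n v : ℕ) : ℕ := if v = n then n - 1 else v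
/-- Target of the first edge. -/
def eb1 (n v : ℕ) : ℕ := if v = n then n + 1 else v + 1
/-- Source of the second edge. -/
def ea2 (n v : ℕ) : ℕ := if v = n then n else 2 * n - v
/-- Target of the second edge. -/
def eb2 (n v : ℕ) : ℕ := if v = n then n + 2 else 2 * n + 1 - v
/-- Level shift of the second edge. -/
def edl (n v : ℕ) : ℕ := if v = n then 0 else n - 1 - v

/-- Integer indicator. -/
noncomputable def ind (p : Prop) : ℤ := by classical exact if p then 1 else 0

theorem ind_pos {p : Prop} (h : p) : ind p = 1 := by unfold ind; exact if_pos h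
theorem ind_neg {p : Prop} (h : ¬ p) : ind p = 0 := by unfold ind; exact if_neg h

theorem box_eval (hn : 4 ≤ n) (hadm : Admissible n ι) {v m e : ℕ} (h1 : 1 ≤ v) (h2 : v ≤ n)
    (hm : 1 ≤ m) (he : 1 ≤ e) (he' : e ≤ 2 * n) (l t : ℤ) (ht : t + PD ι n v = m) :
    boxD ι n l e (occPos ι v m) =
      ((ind (l = t ∧ e = ea1 n v) - ind (l = t - 1 ∧ e = eb1 n v)
        + ind (l = t - edl n v ∧ e = ea2 n v)
        - ind (l = t - edl n v - 1 ∧ e = eb2 n v) : ℤ) : ℚ) := by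
  unfold boxD ea1 eb1 ea2 eb2 edl ind
  generalize PD ι n = P at *
  rw [if_neg (show e ≠ 0 by omega)]
  split_ifs <;> simp only [Pi.add_apply, Pi.sub_apply, xsj_eval hadm h1 h2 hm] <;> grind

theorem box_zero (hadm : Admissible n ι) (l : ℤ) (e : ℕ) : boxD ι n l e 0 = 0 := by
  unfold boxD
  split_ifs <;> simp [xsj_zero hadm]

theorem box_diff1 (hn : 4 ≤ n) (hadm : Admissible n ι) (hadap : Adapted n (cartanD n) ι)
    {v m : ℕ} (h1 : 1 ≤ v) (h2 : v ≤ n)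
    (hm : 1 ≤ m) (t : ℤ) (ht : t + PD ι n v = m) :
    boxD ι n t (ea1 n v) - boxD ι n t (eb1 n v) = beta (cartanD n) ι (occPos ι v m) := by
  have hs := fun (u : ℕ) => PD_succ (ι := ι) hn (v := u)
  have hl := PD_last (ι := ι) hn
  have hz := PD_zero (ι := ι) hn
  have ho := PD_one (ι := ι) hn
  have hp := fun (a b : ℕ) => pval_add (ι := ι) hadm (i := a) (j := b)
  by_cases c1 : v ≤ n - 3
  · rw [beta_low hn hadm hadap h1 c1 hm]
    have e1 : ea1 n v = v := by unfold ea1; rw [if_neg (by omega)]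
    have e2 : eb1 n v = v + 1 := by unfold eb1; rw [if_neg (by omega)]
    have q1 := hs v h1 (by omega)
    have k1 : boxD ι n t v = xsj ι n m v - xsj ι n ((m : ℤ) + pval ι (v - 1) v) (v - 1) := by
      unfold boxD
      rw [if_neg (by omega), if_pos (by omega)]
      rcases Nat.lt_or_ge 1 v with h | h
      · have q2 := hs (v - 1) (by omega) (by omega)
        have q3 := hp v (v - 1) h1 h2 (by omega) (by omega) (by omega)
        rw [show v - 1 + 1 = v by omega] at q2
        congr 2 <;> omega
      · have : v = 1 := by omega
        subst this
        simp only [ho] at ht ⊢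
        simp [xsj, ← ht]
    have k2 : boxD ι n t (v + 1) = xsj ι n ((m : ℤ) + pval ι (v + 1) v) (v + 1)
        - xsj ι n (m + 1) v := by
      unfold boxD
      rw [if_neg (by omega), if_pos (by omega), Nat.add_sub_cancel]
      congr 2 <;> omega
    rw [e1, e2, k1, k2]
    abel
  by_cases c2 : v = n - 2
  · subst c2
    rw [beta_fork hn hadm hadap hm]
    have e1 : ea1 n (n - 2) = n - 2 := by unfold ea1; rw [if_neg (by omega)]
    have e2 : eb1 n (n - 2) = n - 1 := by unfold eb1; rw [if_neg (by omega)]; omega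
    have q1 := hs (n - 2) h1 (by omega)
    have q2 := hs (n - 3) (by omega) (by omega)
    rw [show n - 2 + 1 = n - 1 by omega] at q1
    rw [show n - 3 + 1 = n - 2 by omega] at q2
    have q3 := hp (n - 2) (n - 3) (by omega) (by omega) (by omega) (by omega) (by omega)
    have k1 : boxD ι n t (n - 2) = xsj ι n m (n - 2)
        - xsj ι n ((m : ℤ) + pval ι (n - 3) (n - 2)) (n - 3) := by
      unfold boxD
      rw [if_neg (by omega), if_pos (by omega), show n - 2 - 1 = n - 3 by omega]
      congr 2 <;> omega
    have k2 : boxD ι n t (n - 1) = xsj ι n ((m : ℤ) + pval ι (n - 1) (n - 2)) (n - 1)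
        + xsj ι n ((m : ℤ) + pval ι n (n - 2)) n - xsj ι n (m + 1) (n - 2) := by
      unfold boxD
      rw [if_neg (by omega), if_neg (by omega), if_pos rfl]
      congr 2
      · congr 1; omega
      · congr 1; omega
      · omega
    rw [e1, e2, k1, k2]
    abel
  have q1 := hs (n - 2) (by omega) (by omega)
  rw [show n - 2 + 1 = n - 1 by omega] at q1
  have q3 := hp n (n - 2) (by omega) (by omega) (by omega) (by omega) (by omega)
  have q4 := hp (n - 1) (n - 2) (by omega) (by omega) (by omega) (by omega) (by omega)
  by_cases c3 : v = n - 1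
  · subst c3
    rw [beta_leg hn hadm hadap (Or.inl rfl) hm]
    have e1 : ea1 n (n - 1) = n - 1 := by unfold ea1; rw [if_neg (by omega)]
    have e2 : eb1 n (n - 1) = n := by unfold eb1; rw [if_neg (by omega)]; omega
    rw [e1, e2]
    unfold boxD
    rw [if_neg (by omega), if_neg (by omega), if_pos rfl, if_neg (by omega), if_neg (by omega),
      if_neg (by omega), if_pos rfl, ht,
      show t + (PD ι n (n - 2) : ℤ) + 1 = (m : ℤ) + pval ι (n - 2) (n - 1) by omega]
    abel
  · have c4 : v = n := by omega
    subst c4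
    rw [beta_leg hn hadm hadap (Or.inr rfl) hm]
    have e1 : ea1 v v = v - 1 := by unfold ea1; rw [if_pos rfl]
    have e2 : eb1 v v = v + 1 := by unfold eb1; rw [if_pos rfl]
    rw [e1, e2]
    unfold boxD
    rw [if_neg (by omega), if_neg (by omega), if_pos rfl, if_neg (by omega), if_neg (by omega),
      if_neg (by omega), if_neg (by omega), if_pos rfl, ht,
      show t + (PD ι v (v - 2) : ℤ) + 1 = (m : ℤ) + pval ι (v - 2) v by omega]
    abel

theorem box_pair {v : ℕ} (hn : 4 ≤ n) (h1 : 1 ≤ v) (h2 : v ≤ n) (t : ℤ) :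
    boxD ι n t (ea2 n v) - boxD ι n t (eb2 n v) =
      boxD ι n (t + edl n v) (ea1 n v) - boxD ι n (t + edl n v) (eb1 n v) := by
  by_cases c1 : v ≤ n - 3
  · have e1 : ea1 n v = v := by unfold ea1; rw [if_neg (by omega)]
    have e2 : eb1 n v = v + 1 := by unfold eb1; rw [if_neg (by omega)]
    have e3 : ea2 n v = 2 * n - v := by unfold ea2; rw [if_neg (by omega)]
    have e4 : eb2 n v = 2 * n + 1 - v := by unfold eb2; rw [if_neg (by omega)]
    have e5 : edl n v = n - 1 - v := by unfold edl; rw [if_neg (by omega)]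
    have k1 : boxD ι n (t + edl n v) (ea1 n v) = xsj ι n (t + edl n v + PD ι n v) v
        - xsj ι n (t + edl n v + PD ι n (v - 1) + 1) (v - 1) := by
      rw [e1]; unfold boxD
      rw [if_neg (by omega), if_pos (by omega)]
    have k2 : boxD ι n (t + edl n v) (eb1 n v) = xsj ι n (t + edl n v + PD ι n (v + 1)) (v + 1)
        - xsj ι n (t + edl n v + PD ι n v + 1) v := by
      rw [e2]; unfold boxD
      rw [if_neg (by omega), if_pos (by omega), Nat.add_sub_cancel]
    have k4 : boxD ι n t (eb2 n v) = xsj ι n (t + edl n v + PD ι n (v - 1) + 1) (v - 1)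
        - xsj ι n (t + edl n v + PD ι n v + 1) v := by
      rw [e4]; unfold boxD
      rw [if_neg (by omega), if_neg (by omega), if_neg (by omega), if_neg (by omega),
        if_neg (by omega), if_neg (by omega), show 2 * n - (2 * n + 1 - v) = v - 1 by omega,
        show 2 * n + 1 - (2 * n + 1 - v) = v by omega]
      congr 2 <;> omega
    have k3 : boxD ι n t (ea2 n v) = xsj ι n (t + edl n v + PD ι n v) v
        - xsj ι n (t + edl n v + PD ι n (v + 1)) (v + 1) := by
      rw [e3]; unfold boxD
      rw [if_neg (by omega), if_neg (by omega), if_neg (by omega), if_neg (by omega),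
        if_neg (by omega), if_neg (by omega), show 2 * n - (2 * n - v) = v by omega,
        show 2 * n + 1 - (2 * n - v) = v + 1 by omega]
      congr 2 <;> omega
    rw [k1, k2, k3, k4]
    abel
  by_cases c2 : v = n - 2
  · subst c2
    have e1 : ea1 n (n - 2) = n - 2 := by unfold ea1; rw [if_neg (by omega)]
    have e2 : eb1 n (n - 2) = n - 1 := by unfold eb1; rw [if_neg (by omega)]; omega
    have e3 : ea2 n (n - 2) = n + 2 := by unfold ea2; rw [if_neg (by omega)]; omega
    have e4 : eb2 n (n - 2) = n + 3 := by unfold eb2; rw [if_neg (by omega)]; omega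
    have e5 : edl n (n - 2) = 1 := by unfold edl; rw [if_neg (by omega)]; omega
    have k1 : boxD ι n (t + 1) (n - 2) = xsj ι n (t + 1 + PD ι n (n - 2)) (n - 2)
        - xsj ι n (t + 1 + PD ι n (n - 3) + 1) (n - 3) := by
      unfold boxD
      rw [if_neg (by omega), if_pos (by omega), show n - 2 - 1 = n - 3 by omega]
    have k2 : boxD ι n (t + 1) (n - 1) = xsj ι n (t + 1 + PD ι n (n - 1)) (n - 1)
        + xsj ι n (t + 1 + PD ι n n) n - xsj ι n (t + 1 + PD ι n (n - 2) + 1) (n - 2) := by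
      unfold boxD
      rw [if_neg (by omega), if_neg (by omega), if_pos rfl]
    have k3 : boxD ι n t (n + 2) = xsj ι n (t + 1 + PD ι n (n - 2)) (n - 2)
        - xsj ι n (t + 1 + PD ι n (n - 1)) (n - 1) - xsj ι n (t + 1 + PD ι n n) n := by
      unfold boxD
      rw [if_neg (by omega), if_neg (by omega), if_neg (by omega), if_neg (by omega),
        if_neg (by omega), if_pos (by omega)]
      simp only [add_right_comm]
    have k4 : boxD ι n t (n + 3) = xsj ι n (t + 1 + PD ι n (n - 3) + 1) (n - 3)
        - xsj ι n (t + 1 + PD ι n (n - 2) + 1) (n - 2) := by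
      unfold boxD
      rw [if_neg (by omega), if_neg (by omega), if_neg (by omega), if_neg (by omega),
        if_neg (by omega), if_neg (by omega), show 2 * n - (n + 3) = n - 3 by omega,
        show 2 * n + 1 - (n + 3) = n - 2 by omega]
      congr 2 <;> omega
    rw [e1, e2, e3, e4, e5, Nat.cast_one, k1, k2, k3, k4]
    abel
  have kn1 : boxD ι n t (n - 1) = xsj ι n (t + PD ι n (n - 1)) (n - 1)
      + xsj ι n (t + PD ι n n) n - xsj ι n (t + PD ι n (n - 2) + 1) (n - 2) := by
    unfold boxD
    rw [if_neg (by omega), if_neg (by omega), if_pos rfl]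
  have kn : boxD ι n t n = xsj ι n (t + PD ι n n) n
      - xsj ι n (t + PD ι n (n - 1) + 1) (n - 1) := by
    unfold boxD
    rw [if_neg (by omega), if_neg (by omega), if_neg (by omega), if_pos rfl]
  have kb : boxD ι n t (n + 1) = xsj ι n (t + PD ι n (n - 1)) (n - 1)
      - xsj ι n (t + PD ι n n + 1) n := by
    unfold boxD
    rw [if_neg (by omega), if_neg (by omega), if_neg (by omega), if_neg (by omega), if_pos rfl]
  have kb1 : boxD ι n t (n + 2) = xsj ι n (t + PD ι n (n - 2) + 1) (n - 2)
      - xsj ι n (t + PD ι n (n - 1) + 1) (n - 1) - xsj ι n (t + PD ι n n + 1) n := by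
    unfold boxD
    rw [if_neg (by omega), if_neg (by omega), if_neg (by omega), if_neg (by omega),
      if_neg (by omega), if_pos rfl]
  by_cases c3 : v = n - 1
  · have e1 : ea1 n v = n - 1 := by unfold ea1; rw [if_neg (by omega)]; omega
    have e2 : eb1 n v = n := by unfold eb1; rw [if_neg (by omega)]; omega
    have e3 : ea2 n v = n + 1 := by unfold ea2; rw [if_neg (by omega)]; omega
    have e4 : eb2 n v = n + 2 := by unfold eb2; rw [if_neg (by omega)]; omega
    have e5 : edl n v = 0 := by unfold edl; rw [if_neg (by omega)]; omega
    rw [e1, e2, e3, e4, e5, Nat.cast_zero, add_zero, kn, kn1, kb, kb1]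
    abel
  · have c4 : v = n := by omega
    have e1 : ea1 n v = n - 1 := by unfold ea1; rw [if_pos c4]
    have e2 : eb1 n v = n + 1 := by unfold eb1; rw [if_pos c4]
    have e3 : ea2 n v = n := by unfold ea2; rw [if_pos c4]
    have e4 : eb2 n v = n + 2 := by unfold eb2; rw [if_pos c4]
    have e5 : edl n v = 0 := by unfold edl; rw [if_pos c4]
    rw [e1, e2, e3, e4, e5, Nat.cast_zero, add_zero, kn, kn1, kb, kb1]
    abel

theorem box_diff2 (hn : 4 ≤ n) (hadm : Admissible n ι) (hadap : Adapted n (cartanD n) ι)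
    {v m : ℕ} (h1 : 1 ≤ v) (h2 : v ≤ n)
    (hm : 1 ≤ m) (t : ℤ) (ht : t + edl n v + PD ι n v = m) :
    boxD ι n t (ea2 n v) - boxD ι n t (eb2 n v) = beta (cartanD n) ι (occPos ι v m) := by
  rw [box_pair hn h1 h2, box_diff1 hn hadm hadap h1 h2 hm _ ht]

end Boxes

section Tabs

variable {n : ℕ} {ι : ℕ → ℕ}

/-- The column `j` has entry `e` in the (integer) row `q`. -/
def hs (j : ℕ → ℕ) (k : ℕ) (q : ℤ) (e : ℕ) : Prop :=
  ∃ i : ℕ, (i : ℤ) = q ∧ 1 ≤ i ∧ i ≤ k ∧ j i = e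

/-- Validity of a column. -/
def TV (n k : ℕ) (j : ℕ → ℕ) : Prop :=
  (∀ i, 1 ≤ i → i ≤ k → 1 ≤ j i ∧ j i ≤ 2 * n) ∧
    (∀ i, 1 ≤ i → i < k → ¬ leD n (j (i + 1)) (j i))

/-- The coefficient of a tableau at a node. -/
noncomputable def cv (n k : ℕ) (j : ℕ → ℕ) (p : ℤ) (v : ℕ) : ℤ :=
  ind (hs j k p (ea1 n v)) - ind (hs j k (p + 1) (eb1 n v))
    + ind (hs j k (p + edl n v) (ea2 n v)) - ind (hs j k (p + edl n v + 1) (eb2 n v))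

theorem edge_cases (n v : ℕ) (h2 : v ≤ n) :
    (v < n ∧ ea1 n v = v ∧ eb1 n v = v + 1 ∧ ea2 n v = 2 * n - v ∧ eb2 n v = 2 * n + 1 - v ∧
      edl n v = n - 1 - v) ∨
    (v = n ∧ ea1 n v = n - 1 ∧ eb1 n v = n + 1 ∧ ea2 n v = n ∧ eb2 n v = n + 2 ∧
      edl n v = 0) := by
  unfold ea1 eb1 ea2 eb2 edl
  split_ifs <;> omega

theorem sum_ind (k : ℕ) (j : ℕ → ℕ) (s t : ℤ) (e : ℕ) :
    ∑ i ∈ Finset.Icc 1 k, ind (s + (k : ℤ) - (i : ℤ) = t ∧ j i = e)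
      = ind (hs j k (s + k - t) e) := by
  by_cases h : hs j k (s + k - t) e
  · rw [ind_pos h]
    obtain ⟨i, hi, h1, h2, h3⟩ := h
    rw [Finset.sum_eq_single i]
    · exact ind_pos ⟨by omega, h3⟩
    · intro b _ hb
      exact ind_neg (by omega)
    · intro hni
      exact absurd (Finset.mem_Icc.2 ⟨h1, h2⟩) hni
  · rw [ind_neg h]
    apply Finset.sum_eq_zero
    intro i hi
    rw [Finset.mem_Icc] at hi
    apply ind_neg
    rintro ⟨ha, hb⟩
    exact h ⟨i, by omega, hi.1, hi.2, hb⟩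

theorem tab_eval (hn : 4 ≤ n) (hadm : Admissible n ι) {k : ℕ} {j : ℕ → ℕ} (hj : TV n k j)
    {v m : ℕ} (h1 : 1 ≤ v) (h2 : v ≤ n) (hm : 1 ≤ m) (s t : ℤ) (ht : t + PD ι n v = m) :
    tab (boxD ι n) s k j (occPos ι v m) = (cv n k j (s + k - t) v : ℚ) := by
  unfold tab cv
  rw [Finset.sum_apply]
  rw [Finset.sum_congr rfl (fun i hi => box_eval hn hadm h1 h2 hm
    (hj.1 i (Finset.mem_Icc.1 hi).1 (Finset.mem_Icc.1 hi).2).1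
    (hj.1 i (Finset.mem_Icc.1 hi).1 (Finset.mem_Icc.1 hi).2).2 _ t ht)]
  rw [← Int.cast_sum, Finset.sum_sub_distrib, Finset.sum_add_distrib, Finset.sum_sub_distrib,
    sum_ind, sum_ind, sum_ind, sum_ind]
  rw [show s + (k : ℤ) - (t - 1) = s + k - t + 1 by ring,
    show s + (k : ℤ) - (t - edl n v) = s + k - t + edl n v by ring,
    show s + (k : ℤ) - (t - edl n v - 1) = s + k - t + edl n v + 1 by ring]

theorem tab_update (s : ℤ) {k i : ℕ} (j : ℕ → ℕ) (b : ℕ) (h1 : 1 ≤ i) (h2 : i ≤ k) :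
    tab (boxD ι n) s k (Function.update j i b) = tab (boxD ι n) s k j
      - (boxD ι n (s + k - i) (j i) - boxD ι n (s + k - i) b) := by
  unfold tab
  have hi : i ∈ Finset.Icc 1 k := Finset.mem_Icc.2 ⟨h1, h2⟩
  rw [← Finset.add_sum_erase _ _ hi, ← Finset.add_sum_erase (Finset.Icc 1 k)
    (fun i : ℕ => boxD ι n (s + (k : ℤ) - (i : ℤ)) (j i)) hi]
  rw [Finset.sum_congr rfl (g := fun i : ℕ => boxD ι n (s + (k : ℤ) - (i : ℤ)) (j i))]
  · simp only [Function.update_self]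
    abel
  · intro x hx
    rw [Function.update_of_ne (Finset.ne_of_mem_erase hx)]

theorem TV_update {k i b : ℕ} {j : ℕ → ℕ} (hj : TV n k j) (hb : 1 ≤ b) (hb' : b ≤ 2 * n)
    (hnext : i < k → ¬ leD n (j (i + 1)) b)
    (hprev : 1 < i → i ≤ k → ¬ leD n b (j (i - 1))) : TV n k (Function.update j i b) := by
  constructor
  · intro x hx hx'
    by_cases e : x = i
    · subst e; simp only [Function.update_self]; exact ⟨hb, hb'⟩
    · rw [Function.update_of_ne e]; exact hj.1 x hx hx'
  · intro x hx hx'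
    by_cases e : x = i
    · subst e
      rw [Function.update_self, Function.update_of_ne (by omega)]
      exact hnext hx'
    · by_cases e' : x + 1 = i
      · subst e'
        rw [Function.update_self, Function.update_of_ne (by omega)]
        exact hprev (by omega) (by omega)
      · rw [Function.update_of_ne e, Function.update_of_ne e']
        exact hj.2 x hx hx'

theorem hs_nat {j : ℕ → ℕ} {k i e : ℕ} (h1 : 1 ≤ i) (h2 : i ≤ k) {q : ℤ} (hq : q = i) :
    hs j k q e ↔ j i = e := by
  constructor
  · rintro ⟨x, hx, _, _, h⟩
    have : x = i := by omega
    subst this; exact h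
  · intro h
    exact ⟨i, hq.symm, h1, h2, h⟩

theorem hs_update {j : ℕ → ℕ} {k i b e : ℕ} (h1 : 1 ≤ i) (h2 : i ≤ k) {q : ℤ} :
    hs (Function.update j i b) k q e ↔ (q = i ∧ b = e) ∨ (q ≠ i ∧ hs j k q e) := by
  by_cases hq : q = i
  · rw [hs_nat h1 h2 hq]
    simp [hq]
  · simp only [hq, false_and, ne_eq, not_false_eq_true, true_and, false_or]
    constructor
    · rintro ⟨x, hx, ha, hb, h⟩
      refine ⟨x, hx, ha, hb, ?_⟩
      rwa [Function.update_of_ne (by omega)] at h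
    · rintro ⟨x, hx, ha, hb, h⟩
      refine ⟨x, hx, ha, hb, ?_⟩
      rwa [Function.update_of_ne (by omega)]

theorem ind_cases (p : Prop) : (p ∧ ind p = 1) ∨ (¬ p ∧ ind p = 0) := by
  by_cases h : p
  · exact Or.inl ⟨h, ind_pos h⟩
  · exact Or.inr ⟨h, ind_neg h⟩

theorem cv_pos_cases (hn : 4 ≤ n) {k v : ℕ} {j : ℕ → ℕ} {p : ℤ} (h2 : v ≤ n)
    (hc : 0 < cv n k j p v) :
    (hs j k p (ea1 n v) ∧ ¬ hs j k (p + 1) (eb1 n v) ∧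
      (edl n v = 0 → ¬ hs j k (p + 1) (eb2 n v))) ∨
    (hs j k (p + edl n v) (ea2 n v) ∧ ¬ hs j k (p + edl n v + 1) (eb2 n v) ∧
      (edl n v = 0 → ¬ hs j k (p + 1) (eb1 n v))) := by
  have hex : edl n v = 0 → ¬ (hs j k p (ea1 n v) ∧ hs j k (p + edl n v) (ea2 n v)) := by
    rintro h0 ⟨⟨x, hx, _, _, hx'⟩, ⟨y, hy, _, _, hy'⟩⟩
    have : x = y := by omega
    subst this
    rcases edge_cases n v h2 with h | h <;> omega
  unfold cv at hc
  rcases ind_cases (hs j k p (ea1 n v)) with ⟨a, a'⟩ | ⟨a, a'⟩ <;>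
  rcases ind_cases (hs j k (p + 1) (eb1 n v)) with ⟨b, b'⟩ | ⟨b, b'⟩ <;>
  rcases ind_cases (hs j k (p + edl n v) (ea2 n v)) with ⟨c, c'⟩ | ⟨c, c'⟩ <;>
  rcases ind_cases (hs j k (p + edl n v + 1) (eb2 n v)) with ⟨d, d'⟩ | ⟨d, d'⟩ <;>
  first
  | (exfalso; omega)
  | (by_cases h0 : edl n v = 0
     · simp only [h0, Nat.cast_zero, add_zero] at *
       tauto
     · tauto)

theorem cv_neg_cases (hn : 4 ≤ n) {k v : ℕ} {j : ℕ → ℕ} {p : ℤ} (h2 : v ≤ n)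
    (hc : cv n k j p v < 0) :
    (hs j k (p + 1) (eb1 n v) ∧ ¬ hs j k p (ea1 n v) ∧
      (edl n v = 0 → ¬ hs j k p (ea2 n v))) ∨
    (hs j k (p + edl n v + 1) (eb2 n v) ∧ ¬ hs j k (p + edl n v) (ea2 n v) ∧
      (edl n v = 0 → ¬ hs j k p (ea1 n v))) := by
  have hex : edl n v = 0 → ¬ (hs j k (p + 1) (eb1 n v) ∧ hs j k (p + edl n v + 1) (eb2 n v)) := by
    rintro h0 ⟨⟨x, hx, _, _, hx'⟩, ⟨y, hy, _, _, hy'⟩⟩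
    have : x = y := by omega
    subst this
    rcases edge_cases n v h2 with h | h <;> omega
  unfold cv at hc
  rcases ind_cases (hs j k p (ea1 n v)) with ⟨a, a'⟩ | ⟨a, a'⟩ <;>
  rcases ind_cases (hs j k (p + 1) (eb1 n v)) with ⟨b, b'⟩ | ⟨b, b'⟩ <;>
  rcases ind_cases (hs j k (p + edl n v) (ea2 n v)) with ⟨c, c'⟩ | ⟨c, c'⟩ <;>
  rcases ind_cases (hs j k (p + edl n v + 1) (eb2 n v)) with ⟨d, d'⟩ | ⟨d, d'⟩ <;>
  first
  | (exfalso; omega)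
  | (by_cases h0 : edl n v = 0
     · simp only [h0, Nat.cast_zero, add_zero] at *
       tauto
     · tauto)

theorem step_down (hn : 4 ≤ n) (hadm : Admissible n ι) (hadap : Adapted n (cartanD n) ι)
    {k : ℕ} {j : ℕ → ℕ} (hj : TV n k j)
    {v m : ℕ} (h1 : 1 ≤ v) (h2 : v ≤ n) (hm : 1 ≤ m) (s t : ℤ) (ht : t + PD ι n v = m)
    (hc : 0 < cv n k j (s + k - t) v) :
    ∃ j', TV n k j' ∧ tab (boxD ι n) s k j' =
      tab (boxD ι n) s k j - beta (cartanD n) ι (occPos ι v m) := by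
  have he := edge_cases n v h2
  rcases cv_pos_cases hn h2 hc with ⟨⟨i, hi, i1, i2, i3⟩, hb, hd⟩ | ⟨⟨i, hi, i1, i2, i3⟩, hb, hd⟩
  · refine ⟨Function.update j i (eb1 n v), TV_update hj (by omega) (by omega) ?_ ?_, ?_⟩
    · intro hik
      rw [hs_nat (i := i + 1) (by omega) (by omega) (by push_cast; omega)] at hb hd
      have := hj.2 i i1 hik
      unfold leD at *
      omega
    · intro hik _
      have := hj.2 (i - 1) (by omega) (by omega)
      rw [show i - 1 + 1 = i by omega] at this
      unfold leD at *
      omega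
    · rw [tab_update s j _ i1 i2, i3, box_diff1 hn hadm hadap h1 h2 hm _ (by omega)]
  · refine ⟨Function.update j i (eb2 n v), TV_update hj (by omega) (by omega) ?_ ?_, ?_⟩
    · intro hik
      rw [hs_nat (i := i + 1) (by omega) (by omega) (by push_cast; omega)] at hb
      have hd' : edl n v = 0 → j (i + 1) ≠ eb1 n v := by
        intro h0
        have := hd h0
        rwa [hs_nat (i := i + 1) (by omega) (by omega) (by push_cast; omega)] at this
      have := hj.2 i i1 hik
      unfold leD at *
      omega
    · intro hik _
      have := hj.2 (i - 1) (by omega) (by omega)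
      rw [show i - 1 + 1 = i by omega] at this
      unfold leD at *
      omega
    · rw [tab_update s j _ i1 i2, i3, box_diff2 hn hadm hadap h1 h2 hm _ (by omega)]

theorem step_up (hn : 4 ≤ n) (hadm : Admissible n ι) (hadap : Adapted n (cartanD n) ι)
    {k : ℕ} {j : ℕ → ℕ} (hj : TV n k j)
    {v m : ℕ} (h1 : 1 ≤ v) (h2 : v ≤ n) (hm : 1 ≤ m) (s t : ℤ) (ht : t + PD ι n v = m + 1)
    (hc : cv n k j (s + k - t) v < 0) :
    ∃ j', TV n k j' ∧ tab (boxD ι n) s k j' =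
      tab (boxD ι n) s k j + beta (cartanD n) ι (occPos ι v m) := by
  have he := edge_cases n v h2
  rcases cv_neg_cases hn h2 hc with ⟨⟨i, hi, i1, i2, i3⟩, hb, hd⟩ | ⟨⟨i, hi, i1, i2, i3⟩, hb, hd⟩
  · refine ⟨Function.update j i (ea1 n v), TV_update hj (by omega) (by omega) ?_ ?_, ?_⟩
    · intro hik
      have := hj.2 i i1 hik
      unfold leD at *
      omega
    · intro hik _
      rw [hs_nat (i := i - 1) (by omega) (by omega) (by omega)] at hb hd
      have := hj.2 (i - 1) (by omega) (by omega)
      rw [show i - 1 + 1 = i by omega] at this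
      unfold leD at *
      omega
    · rw [tab_update s j _ i1 i2, i3, ← box_diff1 hn hadm hadap h1 h2 hm (s + k - i) (by omega)]
      abel
  · refine ⟨Function.update j i (ea2 n v), TV_update hj (by omega) (by omega) ?_ ?_, ?_⟩
    · intro hik
      have := hj.2 i i1 hik
      unfold leD at *
      omega
    · intro hik _
      rw [hs_nat (i := i - 1) (by omega) (by omega) (by omega)] at hb
      have hd' : edl n v = 0 → j (i - 1) ≠ ea1 n v := by
        intro h0
        have := hd h0
        rwa [hs_nat (i := i - 1) (by omega) (by omega) (by omega)] at this
      have := hj.2 (i - 1) (by omega) (by omega)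
      rw [show i - 1 + 1 = i by omega] at this
      unfold leD at *
      omega
    · rw [tab_update s j _ i1 i2, i3, ← box_diff2 hn hadm hadap h1 h2 hm (s + k - i) (by omega)]
      abel

theorem iter_down (hn : 4 ≤ n) (hadm : Admissible n ι) (hadap : Adapted n (cartanD n) ι)
    {k v m : ℕ} (h1 : 1 ≤ v) (h2 : v ≤ n) (hm : 1 ≤ m) (s t : ℤ) (ht : t + PD ι n v = m) (N : ℕ) :
    ∀ j, TV n k j → cv n k j (s + k - t) v = N →
    ∃ j', TV n k j' ∧ tab (boxD ι n) s k j' =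
      tab (boxD ι n) s k j - (N : ℚ) • beta (cartanD n) ι (occPos ι v m) := by
  induction N with
  | zero => intro j hj _; exact ⟨j, hj, by simp⟩
  | succ N ih =>
    intro j hj hc
    obtain ⟨j1, hj1, e1⟩ := step_down hn hadm hadap hj h1 h2 hm s t ht (by omega)
    have hc1 : cv n k j1 (s + k - t) v = N := by
      have := congrFun e1 (occPos ι v m)
      rw [Pi.sub_apply, tab_eval hn hadm hj1 h1 h2 hm s t ht, tab_eval hn hadm hj h1 h2 hm s t ht,
        beta_eval hadm hadap h1 h2 hm h1 h2 hm, if_pos rfl, if_pos (Or.inl rfl), hc] at this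
      have h' : (cv n k j1 (s + k - t) v : ℚ) = ((N : ℤ) : ℚ) := by
        rw [this]; push_cast; ring
      exact_mod_cast h'
    obtain ⟨j2, hj2, e2⟩ := ih j1 hj1 hc1
    refine ⟨j2, hj2, ?_⟩
    rw [e2, e1]
    push_cast
    rw [add_smul, one_smul]
    abel

theorem iter_up (hn : 4 ≤ n) (hadm : Admissible n ι) (hadap : Adapted n (cartanD n) ι)
    {k v m : ℕ} (h1 : 1 ≤ v) (h2 : v ≤ n) (hm : 1 ≤ m) (s t : ℤ)
    (ht : t + PD ι n v = m + 1) (N : ℕ) :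
    ∀ j, TV n k j → cv n k j (s + k - t) v = -N →
    ∃ j', TV n k j' ∧ tab (boxD ι n) s k j' =
      tab (boxD ι n) s k j + (N : ℚ) • beta (cartanD n) ι (occPos ι v m) := by
  induction N with
  | zero => intro j hj _; exact ⟨j, hj, by simp⟩
  | succ N ih =>
    intro j hj hc
    obtain ⟨j1, hj1, e1⟩ := step_up hn hadm hadap hj h1 h2 hm s t ht (by omega)
    have hm' : 1 ≤ m + 1 := by omega
    have ht' : t + PD ι n v = (m + 1 : ℕ) := by push_cast; exact ht
    have hc1 : cv n k j1 (s + k - t) v = -N := by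
      have := congrFun e1 (occPos ι v (m + 1))
      rw [Pi.add_apply, tab_eval hn hadm hj1 h1 h2 hm' s t ht',
        tab_eval hn hadm hj h1 h2 hm' s t ht',
        beta_eval hadm hadap h1 h2 hm h1 h2 hm', if_pos rfl, if_pos (Or.inr rfl), hc] at this
      have h' : (cv n k j1 (s + k - t) v : ℚ) = ((-N : ℤ) : ℚ) := by
        rw [this]; push_cast; ring
      exact_mod_cast h'
    obtain ⟨j2, hj2, e2⟩ := ih j1 hj1 hc1
    refine ⟨j2, hj2, ?_⟩
    rw [e2, e1]
    push_cast
    rw [add_smul, one_smul]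
    abel

theorem tab_closed (hn : 4 ≤ n) (hadm : Admissible n ι) (hadap : Adapted n (cartanD n) ι)
    {k : ℕ} {j : ℕ → ℕ} (hj : TV n k j) (s : ℤ) {l : ℕ} (hl : 1 ≤ l) :
    ∃ j', TV n k j' ∧ Sop (cartanD n) ι l (tab (boxD ι n) s k j) = tab (boxD ι n) s k j' := by
  obtain ⟨h1, h2⟩ := hadm.1 l hl
  obtain ⟨m, hm, hml⟩ := occ_surj hadm h1 h2 hl rfl
  generalize ι l = v at *
  subst hml
  have ht : ((m : ℤ) - PD ι n v) + PD ι n v = m := by ring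
  have hev := tab_eval hn hadm hj h1 h2 hm s _ ht
  unfold Sop
  rw [hev]
  split_ifs with hp
  · have hp' : 0 < cv n k j (s + k - (m - PD ι n v)) v := by exact_mod_cast hp
    obtain ⟨N, hN⟩ := Int.eq_ofNat_of_zero_le hp'.le
    obtain ⟨j', a, b⟩ := iter_down hn hadm hadap h1 h2 hm s _ ht N j hj hN
    refine ⟨j', a, ?_⟩
    rw [b, hN]; simp
  · have hp' : cv n k j (s + k - (m - PD ι n v)) v ≤ 0 := by
      rw [not_lt] at hp; exact_mod_cast hp
    obtain ⟨m, rfl⟩ := Nat.exists_eq_add_of_le' hm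
    rw [kminus_occ hadm h1 h2]
    rcases Nat.eq_zero_or_pos m with rfl | hm0
    · refine ⟨j, hj, ?_⟩
      simp [occPos, beta]
    · obtain ⟨N, hN⟩ := Int.eq_ofNat_of_zero_le (neg_nonneg.2 hp')
      obtain ⟨j', a, b⟩ := iter_up hn hadm hadap h1 h2 hm0 s
        (((m + 1 : ℕ) : ℤ) - PD ι n v) (by push_cast; ring) N j hj (by rw [← hN]; simp)
      refine ⟨j', a, ?_⟩
      rw [b]
      have : cv n k j (s + k - (((m + 1 : ℕ) : ℤ) - PD ι n v)) v = -N := by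
        rw [← hN]; simp
      rw [this]
      simp

end Tabs

section Reach

variable {n : ℕ} {ι : ℕ → ℕ}

/-- The weight used for the induction on columns. -/
def mu (k : ℕ) (j : ℕ → ℕ) : ℕ := ∑ i ∈ Finset.Icc 1 k, (k + 1 - i) * j i

theorem mu_update {k i : ℕ} (j : ℕ → ℕ) (b : ℕ) (h1 : 1 ≤ i) (h2 : i ≤ k) :
    mu k (Function.update j i b) + (k + 1 - i) * j i = mu k j + (k + 1 - i) * b := by
  unfold mu
  have hi : i ∈ Finset.Icc 1 k := Finset.mem_Icc.2 ⟨h1, h2⟩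
  rw [← Finset.add_sum_erase _ _ hi, ← Finset.add_sum_erase (Finset.Icc 1 k)
    (fun i : ℕ => (k + 1 - i) * j i) hi]
  rw [Finset.sum_congr rfl (g := fun i : ℕ => (k + 1 - i) * j i)]
  · simp only [Function.update_self]
    ring
  · intro x hx
    rw [Function.update_of_ne (Finset.ne_of_mem_erase hx)]

theorem mu_lt {k i : ℕ} (j : ℕ → ℕ) (b : ℕ) (h1 : 1 ≤ i) (h2 : i ≤ k) (hb : b < j i) :
    mu k (Function.update j i b) < mu k j := by
  have h := mu_update j b h1 h2
  have : (k + 1 - i) * b < (k + 1 - i) * j i := Nat.mul_lt_mul_of_pos_left hb (by omega)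
  omega

theorem tab_base (hn : 4 ≤ n) (s : ℤ) {k : ℕ} (j : ℕ → ℕ) (hk : k ≤ n - 2)
    (hj : ∀ i, 1 ≤ i → i ≤ k → j i = i) :
    tab (boxD ι n) s k j = xsj ι n (s + PD ι n k) k := by
  have key : ∀ q, q ≤ k → ∑ i ∈ Finset.Icc 1 q, boxD ι n (s + (k : ℤ) - (i : ℤ)) (j i)
      = xsj ι n (s + k - q + PD ι n q) q := by
    intro q
    induction q with
    | zero => intro _; simp [xsj]
    | succ q ih =>
      intro hq
      rw [Finset.sum_Icc_succ_top (by omega), ih (by omega), hj (q + 1) (by omega) hq]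
      unfold boxD
      rw [if_neg (by omega), if_pos (by omega), Nat.add_sub_cancel]
      rw [show s + (k : ℤ) - ((q + 1 : ℕ) : ℤ) + (PD ι n q : ℤ) + 1 = s + k - q + PD ι n q by
        push_cast; ring]
      abel
  unfold tab
  rw [key k le_rfl]
  congr 1
  ring

theorem not_hs {j : ℕ → ℕ} {k e : ℕ} {q : ℤ}
    (h : ∀ x : ℕ, (x : ℤ) = q → 1 ≤ x → x ≤ k → j x ≠ e) : ¬ hs j k q e := by
  rintro ⟨x, a, b, c, d⟩
  exact h x a b c d

theorem Sop_one (A : ℕ → ℕ → ℤ) (l : ℕ) (φ : ℕ → ℚ) (h : φ l = 1) :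
    Sop A ι l φ = φ - beta A ι l := by
  unfold Sop
  rw [if_pos (by rw [h]; norm_num), h, one_smul]

theorem reach1 (hn : 4 ≤ n) (hadm : Admissible n ι) (hadap : Adapted n (cartanD n) ι)
    {g : Set (ℕ → ℚ)} {k i v : ℕ} {j : ℕ → ℕ} (s : ℤ) (i1 : 1 ≤ i) (i2 : i ≤ k)
    (h1 : 1 ≤ v) (h2 : v ≤ n) (hji : j i = eb1 n v)
    (hT : TV n k (Function.update j i (ea1 n v)))
    (hc : cv n k (Function.update j i (ea1 n v)) i v = 1)
    (ht : 1 ≤ s + k - i + PD ι n v)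
    (hX : XiMemFrom (cartanD n) ι g (tab (boxD ι n) s k (Function.update j i (ea1 n v)))) :
    XiMemFrom (cartanD n) ι g (tab (boxD ι n) s k j) := by
  obtain ⟨m, hm⟩ := Int.eq_ofNat_of_zero_le (show 0 ≤ s + k - i + PD ι n v by omega)
  have hm1 : 1 ≤ m := by omega
  have hev := tab_eval hn hadm hT h1 h2 hm1 s (s + k - i) hm
  rw [show s + (k : ℤ) - (s + k - i) = i by ring, hc] at hev
  have hst := XiMemFrom.step (occPos ι v m) (occ_pos hadm h1 h2 hm1) _ hX
  rw [Sop_one _ _ _ (by rw [hev]; norm_num), tab_update s j _ i1 i2, hji,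
    ← box_diff1 hn hadm hadap h1 h2 hm1 (s + k - i) hm] at hst
  convert hst using 1
  abel

theorem reach2 (hn : 4 ≤ n) (hadm : Admissible n ι) (hadap : Adapted n (cartanD n) ι)
    {g : Set (ℕ → ℚ)} {k i v : ℕ} {j : ℕ → ℕ} (s : ℤ) (i1 : 1 ≤ i) (i2 : i ≤ k)
    (h1 : 1 ≤ v) (h2 : v ≤ n) (hji : j i = eb2 n v)
    (hT : TV n k (Function.update j i (ea2 n v)))
    (hc : cv n k (Function.update j i (ea2 n v)) ((i : ℤ) - edl n v) v = 1)
    (ht : 1 ≤ s + k - i + edl n v + PD ι n v)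
    (hX : XiMemFrom (cartanD n) ι g (tab (boxD ι n) s k (Function.update j i (ea2 n v)))) :
    XiMemFrom (cartanD n) ι g (tab (boxD ι n) s k j) := by
  obtain ⟨m, hm⟩ := Int.eq_ofNat_of_zero_le (show 0 ≤ s + k - i + edl n v + PD ι n v by omega)
  have hm1 : 1 ≤ m := by omega
  have hev := tab_eval hn hadm hT h1 h2 hm1 s (s + k - i + edl n v) hm
  rw [show s + (k : ℤ) - (s + k - i + edl n v) = i - edl n v by ring, hc] at hev
  have hst := XiMemFrom.step (occPos ι v m) (occ_pos hadm h1 h2 hm1) _ hX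
  rw [Sop_one _ _ _ (by rw [hev]; norm_num), tab_update s j _ i1 i2, hji,
    ← box_diff2 hn hadm hadap h1 h2 hm1 (s + k - i) hm] at hst
  convert hst using 1
  abel

/-- Coefficient one from the first edge. -/
theorem cv_one1 {k v : ℕ} {j : ℕ → ℕ} {p : ℤ} (ha : hs j k p (ea1 n v))
    (hb : ¬ hs j k (p + 1) (eb1 n v))
    (hcd : hs j k (p + edl n v) (ea2 n v) ↔ hs j k (p + edl n v + 1) (eb2 n v)) :
    cv n k j p v = 1 := by
  unfold cv
  rw [ind_pos ha, ind_neg hb]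
  rcases ind_cases (hs j k (p + edl n v) (ea2 n v)) with ⟨c, c'⟩ | ⟨c, c'⟩ <;>
  rcases ind_cases (hs j k (p + edl n v + 1) (eb2 n v)) with ⟨d, d'⟩ | ⟨d, d'⟩ <;>
  first | omega | tauto

/-- Coefficient one from the second edge. -/
theorem cv_one2 {k v i : ℕ} {j : ℕ → ℕ} (ha : ¬ hs j k ((i : ℤ) - edl n v) (ea1 n v))
    (hb : ¬ hs j k ((i : ℤ) - edl n v + 1) (eb1 n v))
    (hc : hs j k i (ea2 n v)) (hd : ¬ hs j k ((i : ℤ) + 1) (eb2 n v)) :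
    cv n k j ((i : ℤ) - edl n v) v = 1 := by
  unfold cv
  rw [ind_neg ha, ind_neg hb, sub_add_cancel, ind_pos hc, ind_neg hd]
  rfl

theorem TV_lt {k : ℕ} {j : ℕ → ℕ} (hj : TV n k j) {x : ℕ} (h1 : 1 ≤ x) (h2 : x < k) :
    j x < j (x + 1) ∨ (j x = n + 1 ∧ j (x + 1) = n) := by
  have := hj.2 x h1 h2
  unfold leD at this
  omega

set_option maxHeartbeats 4000000 in
theorem reach_all (hn : 4 ≤ n) (hadm : Admissible n ι) (hadap : Adapted n (cartanD n) ι)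
    {k : ℕ} (hk1 : 1 ≤ k) (hk : k ≤ n - 2) (s : ℤ) (hs0 : 1 - (PD ι n k : ℤ) ≤ s) (N : ℕ) :
    ∀ j, TV n k j → mu k j = N →
    XiMemFrom (cartanD n) ι { ψ | ∃ r, 1 ≤ r ∧ ψ = xc (occPos ι k r) }
      (tab (boxD ι n) s k j) := by
  induction N using Nat.strong_induction_on with
  | _ N ih =>
  intro j hj hmu
  subst hmu
  by_cases hall : ∀ i, 1 ≤ i → i ≤ k → j i = i
  · apply XiMemFrom.base
    refine ⟨(s + PD ι n k).toNat, by omega, ?_⟩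
    rw [tab_base hn s j hk hall]
    unfold xsj
    rw [if_pos (by omega)]
  have hex : ∃ i, 1 ≤ i ∧ i ≤ k ∧ j i ≠ i := by
    by_contra hcon
    push Not at hcon
    exact hall hcon
  classical
  obtain ⟨i, ⟨i1, i2, i3⟩, hmin⟩ : ∃ i, (1 ≤ i ∧ i ≤ k ∧ j i ≠ i) ∧
      ∀ x, 1 ≤ x → x < i → j x = x := by
    refine ⟨Nat.find hex, Nat.find_spec hex, ?_⟩
    intro x hx hxi
    have := Nat.find_min hex hxi
    by_contra hne
    have h2 := (Nat.find_spec hex).2.1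
    exact this ⟨hx, by omega, hne⟩
  have hprev : 1 < i → j (i - 1) = i - 1 := fun h => hmin (i - 1) (by omega) (by omega)
  have hlt : ∀ x, 1 ≤ x → x < k → j x < j (x + 1) ∨ (j x = n + 1 ∧ j (x + 1) = n) :=
    fun x a b => TV_lt hj a b
  have hr : 1 ≤ j i ∧ j i ≤ 2 * n := hj.1 i i1 i2
  have hgt : i < j i := by
    rcases Nat.lt_or_ge 1 i with h | h
    · have := hlt (i - 1) (by omega) (by omega)
      rw [show i - 1 + 1 = i by omega, hprev h] at this
      omega
    · omega
  have hn1 : i < k → (j i < j (i + 1) ∨ (j i = n + 1 ∧ j (i + 1) = n)) := hlt i i1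
  have hn2 : i + 1 < k → (j (i + 1) < j (i + 2) ∨ (j (i + 1) = n + 1 ∧ j (i + 2) = n)) :=
    hlt (i + 1) (by omega)
  have hPD : ∀ v, 1 ≤ v → v ≤ n →
      PD ι n k ≤ PD ι n v ∨ (v ≤ k ∧ PD ι n k + v ≤ PD ι n v + k) :=
    fun v a b => PD_bound hn hk1 hk a b
  -- lowering at row `i`
  have hTVi : ∀ b, i ≤ b → b < j i → ¬ (j i = n + 1 ∧ b = n) →  TV n k (Function.update j i b) := by
    intro b hb hb' hb''
    refine TV_update hj (by omega) (by omega) ?_ ?_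
    · intro h
      have := hn1 h
      unfold leD
      omega
    · intro h _
      rw [hprev h]
      unfold leD
      omega
  have hup : ∀ i b x : ℕ, Function.update j i b x = if x = i then b else j x :=
    fun i b x => Function.update_apply j i b x
  rcases Nat.lt_or_ge (j i) n with hA | hA
  · -- entry at most `n - 1`
    obtain ⟨v, hv⟩ : ∃ v, j i = v + 1 := ⟨j i - 1, by omega⟩
    have h1 : 1 ≤ v := by omega
    have h2 : v ≤ n := by omega
    have he : ea1 n v = v ∧ eb1 n v = v + 1 ∧ ea2 n v = 2 * n - v ∧ eb2 n v = 2 * n + 1 - v ∧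
      edl n v = n - 1 - v := by
      rcases edge_cases n v h2 with h | h
      · exact h.2
      · omega
    obtain ⟨e1, e2, e3, e4, e5⟩ := he
    obtain ⟨d, hd⟩ : ∃ d, edl n v = d := ⟨_, rfl⟩
    have hd1 : d + v + 1 = n := by omega
    have hpd := hPD v h1 h2
    have hTV1 := hTVi v (by omega) (by omega) (by omega)
    by_cases hD : hs j k ((i : ℤ) + d) (2 * n - v)
    · by_cases hF : hs j k ((i : ℤ) + d + 1) (2 * n + 1 - v)
      · refine reach1 hn hadm hadap s i1 i2 h1 h2 (by rw [hv, e2]) (by rw [e1]; exact hTV1) ?_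
          (by omega) (by rw [e1]; exact ih _ (mu_lt j v i1 i2 (by omega)) _ hTV1 rfl)
        rw [e1]
        apply cv_one1
        · rw [hs_update i1 i2, e1]; exact Or.inl ⟨rfl, rfl⟩
        · apply not_hs
          intro x hx hx1 hx2
          have : x = i + 1 := by omega
          subst this
          have := hn1 (by omega)
          rw [hup, if_neg (by omega)]
          omega
        · rw [hs_update i1 i2, hs_update i1 i2, e3, e4, hd]
          constructor
          · intro _; exact Or.inr ⟨by omega, hF⟩
          · intro _; exact Or.inr ⟨by omega, hD⟩
      · -- the two columns give the same form
        obtain ⟨y, hy, y1, y2, y3⟩ := hD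
        have hyi : y = i + d := by omega
        have hj2y : Function.update j i v y = 2 * n - v := by
          rw [hup, if_neg (by omega), y3]
        have hTV2 : TV n k (Function.update (Function.update j i v) y (2 * n + 1 - v)) := by
          refine TV_update hTV1 (by omega) (by omega) ?_ ?_
          · intro h
            have hne : j (y + 1) ≠ 2 * n + 1 - v := by
              rwa [hs_nat (i := y + 1) (by omega) (by omega) (by push_cast; omega)] at hF
            have := hlt y y1 h
            rw [hup, if_neg (by omega)]
            unfold leD
            omega
          · intro h _
            have := TV_lt hTV1 (x := y - 1) (by omega) (by omega)
            rw [show y - 1 + 1 = y by omega, hj2y] at this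
            unfold leD
            omega
        have hm1 := mu_update j v i1 i2
        have hm2 := mu_update (Function.update j i v) (2 * n + 1 - v) y1 y2
        rw [hj2y, show 2 * n + 1 - v = 2 * n - v + 1 by omega, Nat.mul_add] at hm2
        rw [hv, Nat.mul_add] at hm1
        rw [show 2 * n - v + 1 = 2 * n + 1 - v by omega] at hm2
        have hX := ih _ (by omega) _ hTV2 rfl
        have hpair := box_pair (ι := ι) hn h1 h2 (s + k - y)
        rw [e1, e2, e3, e4, show s + (k : ℤ) - y + edl n v = s + k - i by omega] at hpair
        rw [tab_update s _ _ y1 y2, hj2y, hpair, tab_update s j _ i1 i2, hv] at hX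
        convert hX using 1
        abel
    · by_cases hF : hs j k ((i : ℤ) + d + 1) (2 * n + 1 - v)
      · obtain ⟨y, hy, y1, y2, y3⟩ := hF
        have hyi : y = i + d + 1 := by omega
        have hTV2 : TV n k (Function.update j y (2 * n - v)) := by
          refine TV_update hj (by omega) (by omega) ?_ ?_
          · intro h
            have := hlt y y1 h
            unfold leD
            omega
          · intro h _
            have hne : j (y - 1) ≠ 2 * n - v := by
              rwa [hs_nat (i := y - 1) (by omega) (by omega) (by omega)] at hD
            have := hlt (y - 1) (by omega) (by omega)
            rw [show y - 1 + 1 = y by omega] at this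
            unfold leD
            omega
        refine reach2 hn hadm hadap s y1 y2 h1 h2 (by rw [y3, e4]) (by rw [e3]; exact hTV2) ?_
          (by omega) (by rw [e3]; exact ih _ (mu_lt j _ y1 y2 (by omega)) _ hTV2 rfl)
        rw [e3]
        apply cv_one2
        · apply not_hs
          intro x hx hx1 hx2
          have : x = i + 1 := by omega
          subst this
          have := hn1 (by omega)
          rw [hup, if_neg (by omega)]
          omega
        · apply not_hs
          intro x hx hx1 hx2
          have : x = i + 2 := by omega
          subst this
          have := hn1 (by omega)
          have := hn2 (by omega)
          rw [hup]
          split_ifs <;> omega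
        · rw [hs_update y1 y2, e3]; exact Or.inl ⟨rfl, rfl⟩
        · apply not_hs
          intro x hx hx1 hx2
          have : x = y + 1 := by omega
          subst this
          have := hlt y y1 (by omega)
          rw [hup, if_neg (by omega)]
          omega
      · refine reach1 hn hadm hadap s i1 i2 h1 h2 (by rw [hv, e2]) (by rw [e1]; exact hTV1) ?_
          (by omega) (by rw [e1]; exact ih _ (mu_lt j v i1 i2 (by omega)) _ hTV1 rfl)
        rw [e1]
        apply cv_one1
        · rw [hs_update i1 i2, e1]; exact Or.inl ⟨rfl, rfl⟩
        · apply not_hs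
          intro x hx hx1 hx2
          have : x = i + 1 := by omega
          subst this
          have := hn1 (by omega)
          rw [hup, if_neg (by omega)]
          omega
        · rw [hs_update i1 i2, hs_update i1 i2, e3, e4, hd]
          constructor
          · rintro (h | h)
            · omega
            · exact absurd h.2 hD
          · rintro (h | h)
            · omega
            · exact absurd h.2 hF
  rcases Nat.lt_or_ge (j i) (n + 2) with hB | hB
  · -- the node attached to the entry `j i`
    obtain ⟨v, h1, h2, e1, e2, e3, e4, e5, hvk⟩ : ∃ v, 1 ≤ v ∧ v ≤ n ∧ ea1 n v = n - 1 ∧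
        eb1 n v = j i ∧ ea2 n v + j i = 2 * n + 1 ∧ eb2 n v = n + 2 ∧ edl n v = 0 ∧ k < v := by
      rcases Nat.lt_or_ge (j i) (n + 1) with h | h
      · refine ⟨n - 1, ?_⟩
        rcases edge_cases n (n - 1) (by omega) with h | h <;> omega
      · refine ⟨n, ?_⟩
        rcases edge_cases n n (by omega) with h | h <;> omega
    have hpd := hPD v h1 h2
    by_cases hC : i < k ∧ j (i + 1) = n + 2
    · obtain ⟨hik', hC⟩ := hC
      have hik : i + 1 ≤ k := hik'
      have hTV2 : TV n k (Function.update j (i + 1) (ea2 n v)) := by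
        refine TV_update hj (by omega) (by omega) ?_ ?_
        · intro h
          have := hn2 h
          rw [show i + 1 + 1 = i + 2 by omega]
          unfold leD
          omega
        · intro _ _
          rw [Nat.add_sub_cancel]
          unfold leD
          omega
      refine reach2 hn hadm hadap s (by omega) hik h1 h2 (by rw [hC, e4]) hTV2 ?_
        (by push_cast; omega) (ih _ (mu_lt j _ (by omega) hik (by omega)) _ hTV2 rfl)
      apply cv_one2
      · apply not_hs
        intro x hx hx1 hx2
        have : x = i + 1 := by omega
        subst this
        rw [hup, if_pos rfl]
        omega
      · apply not_hs
        intro x hx hx1 hx2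
        have : x = i + 2 := by omega
        subst this
        have := hn2 (by omega)
        rw [hup, if_neg (by omega)]
        omega
      · rw [hs_update (by omega) hik]; exact Or.inl ⟨rfl, rfl⟩
      · apply not_hs
        intro x hx hx1 hx2
        have : x = i + 2 := by omega
        subst this
        have := hn2 (by omega)
        rw [hup, if_neg (by omega)]
        omega
    · have hTV1 := hTVi (n - 1) (by omega) (by omega) (by omega)
      refine reach1 hn hadm hadap s i1 i2 h1 h2 e2.symm (by rw [e1]; exact hTV1) ?_
        (by omega) (by rw [e1]; exact ih _ (mu_lt j _ i1 i2 (by omega)) _ hTV1 rfl)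
      rw [e1]
      apply cv_one1
      · rw [hs_update i1 i2, e1]; exact Or.inl ⟨rfl, rfl⟩
      · apply not_hs
        intro x hx hx1 hx2
        have : x = i + 1 := by omega
        subst this
        have := hn1 (by omega)
        rw [hup, if_neg (by omega)]
        omega
      · apply iff_of_false
        · apply not_hs
          intro x hx hx1 hx2
          have : x = i := by omega
          subst this
          rw [hup, if_pos rfl]
          omega
        · apply not_hs
          intro x hx hx1 hx2
          have : x = i + 1 := by omega
          subst this
          rw [hup, if_neg (by omega)]
          intro h
          exact hC ⟨by omega, by omega⟩
  · -- barred entry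
    obtain ⟨v, hv⟩ : ∃ v, v + j i = 2 * n + 1 := ⟨2 * n + 1 - j i, by omega⟩
    have h1 : 1 ≤ v := by omega
    have h2 : v ≤ n := by omega
    have he : ea1 n v = v ∧ eb1 n v = v + 1 ∧ ea2 n v = 2 * n - v ∧ eb2 n v = 2 * n + 1 - v ∧
      edl n v = n - 1 - v := by
      rcases edge_cases n v h2 with h | h
      · exact h.2
      · omega
    obtain ⟨e1, e2, e3, e4, e5⟩ := he
    have hpd := hPD v h1 h2
    have hTV1 := hTVi (2 * n - v) (by omega) (by omega) (by omega)
    refine reach2 hn hadm hadap s i1 i2 h1 h2 (by omega) (by rw [e3]; exact hTV1) ?_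
      (by omega) (by rw [e3]; exact ih _ (mu_lt j _ i1 i2 (by omega)) _ hTV1 rfl)
    rw [e3]
    apply cv_one2
    · apply not_hs
      intro x hx hx1 hx2
      rw [hup]
      split_ifs with h
      · omega
      · rw [hmin x hx1 (by omega)]
        omega
    · apply not_hs
      intro x hx hx1 hx2
      rw [hup]
      split_ifs with h
      · omega
      · rcases Nat.lt_or_ge x i with h' | h'
        · rw [hmin x hx1 h']
          omega
        · have : x = i + 1 := by omega
          subst this
          have := hn1 (by omega)
          omega
    · rw [hs_update i1 i2, e3]; exact Or.inl ⟨rfl, rfl⟩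
    · apply not_hs
      intro x hx hx1 hx2
      have : x = i + 1 := by omega
      subst this
      have := hn1 (by omega)
      rw [hup, if_neg (by omega)]
      omega

end Reach

/-- Lemma 5.9: in type D, for `k ∈ [1,n-2]`, the forms obtained from the `x_{r,k}`
(`r ≥ 1`) by the operators `S_l` are exactly the tableaux of `Tab_{D,ι}` with `k` rows
whose first entry is not `ovl(n+1)` (all entries encoded in `[1,2n]`). -/
theorem xi_from_xrk_D (n : ℕ) (hn : 4 ≤ n) (ι : ℕ → ℕ)
    (hadm : Admissible n ι) (hadap : Adapted n (cartanD n) ι) :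
    ∀ k, 1 ≤ k → k ≤ n - 2 →
      { φ : ℕ → ℚ |
          XiMemFrom (cartanD n) ι { ψ | ∃ r, 1 ≤ r ∧ ψ = xc (occPos ι k r) } φ } =
      { T : ℕ → ℚ | ∃ (s : ℤ) (j : ℕ → ℕ),
          (∀ i, 1 ≤ i → i ≤ k → 1 ≤ j i ∧ j i ≤ 2 * n) ∧
          (∀ i, 1 ≤ i → i < k → ¬ leD n (j (i + 1)) (j i)) ∧
          1 - (PD ι n k : ℤ) ≤ s ∧
          T = tab (boxD ι n) s k j } := by
  intro k hk1 hk
  ext φ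
  constructor
  · intro hφ
    change XiMemFrom _ _ _ _ at hφ
    have key : ∃ (s : ℤ) (j : ℕ → ℕ), TV n k j ∧ 1 - (PD ι n k : ℤ) ≤ s ∧
        φ = tab (boxD ι n) s k j := by
      induction hφ with
      | base φ h =>
        obtain ⟨r, hr, rfl⟩ := h
        refine ⟨(r : ℤ) - PD ι n k, fun i => i, ⟨?_, ?_⟩, by omega, ?_⟩
        · intro i _ _
          constructor <;> dsimp only <;> omega
        · intro i _ _
          unfold leD
          dsimp only
          omega
        · rw [tab_base hn _ _ hk (fun _ _ _ => rfl)]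
          unfold xsj
          rw [if_pos (by omega), sub_add_cancel, Int.toNat_natCast]
      | step l hl φ _ ih =>
        obtain ⟨s, j, hj, hs0, rfl⟩ := ih
        obtain ⟨j', hj', e⟩ := tab_closed hn hadm hadap hj s hl
        exact ⟨s, j', hj', hs0, e⟩
    obtain ⟨s, j, hj, hs0, e⟩ := key
    exact ⟨s, j, hj.1, hj.2, hs0, e⟩
  · rintro ⟨s, j, ha, hb, hs0, rfl⟩
    exact reach_all hn hadm hadap hk1 hk s hs0 _ j ⟨ha, hb⟩ rfl
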